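/- Fix ν, μ > 0 with 2μ + ν ≤ 1 and 2μ ≥ ν. For every ε > 0 there is a constant C_ε such that the following holds for every N > 1. Let I ⊂ [1,2] be an interval of length N^{-ν} and J ⊂ (−π/2, π/2) an interval of length N^{-μ}, and let S = {r(cos φ, sin φ) : r ∈ I, φ ∈ J} ⊂ A₁ be the corresponding sector of length N^{-ν} and aperture N^{-μ}. Partition J into M = ⌈N^{ν/2}⌉ consecutive intervals J₁, …, J_M of equal length, and let S'_j = {r(cos φ, sin φ) : r ∈ I, φ ∈ J_j} be the resulting sectors of aperture ≈ N^{-μ-ν/2}. Then for every bounded measurable g : A₁ → ℂ and every Euclidean ball B_N ⊂ ℝ³ of radius N centered at c, one has ‖E_S g‖_{L⁶(w_{B_N})} ≤ C_ε · N^{νε} · ( Σ_{j=1}^{M} ‖E_{S'_j} g‖²_{L⁶(w_{B_N})} )^{1/2}, where w_{B_N}(x) = (1 + |x − c|/N)^{−30}. -/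

import Mathlib

open MeasureTheory Real
open scoped ENNReal

noncomputable section

/-- The conical extension operator `E_R g(x) = ∫_R g(ξ) e(x₁ξ₁ + x₂ξ₂ + x₃√(ξ₁²+ξ₂²)) dξ`. -/
def coneExt (S : Set (ℝ × ℝ)) (g : ℝ × ℝ → ℂ) (x : EuclideanSpace ℝ (Fin 3)) : ℂ :=
  ∫ ξ in S, g ξ * Complex.exp (2 * Real.pi * Complex.I *
    (x 0 * ξ.1 + x 1 * ξ.2 + x 2 * Real.sqrt (ξ.1 ^ 2 + ξ.2 ^ 2)))

/-- The sector of the plane with radii in `I` and angles in `J`. -/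
def sector (I J : Set ℝ) : Set (ℝ × ℝ) :=
  {p | ∃ r ∈ I, ∃ φ ∈ J, p = (r * Real.cos φ, r * Real.sin φ)}

/-- The weighted `L⁶(w_{B_N})` norm, with weight `w(x) = (1+|x-c|/N)^{-30}`. -/
def wNorm6 (F : EuclideanSpace ℝ (Fin 3) → ℂ) (c : EuclideanSpace ℝ (Fin 3)) (N : ℝ) : ℝ≥0∞ :=
  (∫⁻ x, (‖F x‖₊ : ℝ≥0∞) ^ (6 : ℝ) *
      ENNReal.ofReal ((1 + dist x c / N) ^ (-(30 : ℝ)))) ^ (1 / 6 : ℝ)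

namespace ConeDec

/-- bounded measurable functions -/
def BM {X : Type*} [MeasurableSpace X] (F : X → ℂ) : Prop :=
  Measurable F ∧ ∃ C : ℝ, ∀ x, ‖F x‖ ≤ C

section Core
variable {X : Type*} [MeasurableSpace X]

lemma BM.sum {ι : Type*} {f : ι → X → ℂ} (s : Finset ι) (h : ∀ i ∈ s, BM (f i)) :
    BM (fun x => ∑ i ∈ s, f i x) := by
  classical
  have h' : ∀ i, ∃ C : ℝ, i ∈ s → ∀ x, ‖f i x‖ ≤ C := by
    intro i
    by_cases hi : i ∈ s
    · obtain ⟨C, hC⟩ := (h i hi).2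
      exact ⟨C, fun _ => hC⟩
    · exact ⟨0, fun h => absurd h hi⟩
  choose C hC using h'
  refine ⟨Finset.measurable_sum _ fun i hi => (h i hi).1, ∑ i ∈ s, C i, fun x => ?_⟩
  exact (norm_sum_le _ _).trans (Finset.sum_le_sum fun i hi => hC i hi x)

lemma BM.mul {f g : X → ℂ} (hf : BM f) (hg : BM g) : BM (fun x => f x * g x) := by
  obtain ⟨C, hC⟩ := hf.2
  obtain ⟨D, hD⟩ := hg.2
  refine ⟨hf.1.mul hg.1, C * D, fun x => ?_⟩
  rw [norm_mul]
  exact mul_le_mul (hC x) (hD x) (norm_nonneg _) ((norm_nonneg _).trans (hC x))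

lemma BM.conj {f : X → ℂ} (hf : BM f) : BM (fun x => starRingEnd ℂ (f x)) := by
  obtain ⟨C, hC⟩ := hf.2
  refine ⟨Complex.continuous_conj.measurable.comp hf.1, C, fun x => ?_⟩
  rw [RCLike.norm_conj]
  exact hC x

lemma BM.integrable {f : X → ℂ} (hf : BM f) (W : Measure X) [IsFiniteMeasure W] :
    Integrable f W := by
  obtain ⟨C, hC⟩ := hf.2
  exact Integrable.of_bound hf.1.aestronglyMeasurable C (Filter.Eventually.of_forall hC)

lemma BM.integrable_pow2 {f g : X → ℂ} (hf : BM f) (hg : BM g) (a b : ℕ)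
    (W : Measure X) [IsFiniteMeasure W] :
    Integrable (fun x => ‖f x‖ ^ a * ‖g x‖ ^ b) W := by
  obtain ⟨C, hC⟩ := hf.2
  obtain ⟨D, hD⟩ := hg.2
  refine Integrable.of_bound ((hf.1.norm.pow_const a).mul
    (hg.1.norm.pow_const b)).aestronglyMeasurable (C ^ a * D ^ b)
    (Filter.Eventually.of_forall fun x => ?_)
  rw [Real.norm_of_nonneg (by positivity)]
  have := (norm_nonneg _).trans (hC x)
  gcongr
  · exact hC x
  · exact hD x

lemma BM.integrable_pow {f : X → ℂ} (hf : BM f) (a : ℕ)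
    (W : Measure X) [IsFiniteMeasure W] :
    Integrable (fun x => ‖f x‖ ^ a) W := by
  simpa using hf.integrable_pow2 hf a 0 W

variable (W : Measure X) [IsFiniteMeasure W]

lemma card_near (m R a : ℕ) :
    (((Finset.range m).filter fun b : ℕ => ¬ ((R : ℤ) < |(a : ℤ) - b|)).card : ℝ) ≤ 2 * R + 1 := by
  have : ((Finset.range m).filter fun b : ℕ => ¬ ((R : ℤ) < |(a : ℤ) - b|)) ⊆
      Finset.Icc (a - R) (a + R) := by
    intro b hb
    simp only [Finset.mem_filter, not_lt, abs_le] at hb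
    rw [Finset.mem_Icc]
    omega
  have h2 := Finset.card_le_card this
  rw [Nat.card_Icc] at h2
  have h3 : ((Finset.range m).filter fun b : ℕ => ¬ ((R : ℤ) < |(a : ℤ) - b|)).card ≤ 2 * R + 1 := by
    omega
  exact_mod_cast h3

lemma almost_orth (G : ℕ → X → ℂ) (hG : ∀ a, BM (G a)) (m R : ℕ)
    (h : ∀ a < m, ∀ b < m, (R : ℤ) < |(a : ℤ) - b| →
      ∫ x, G a x * starRingEnd ℂ (G b x) ∂W = 0) :
    ∫ x, ‖∑ a ∈ Finset.range m, G a x‖ ^ 2 ∂W ≤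
      (2 * R + 1) * ∑ a ∈ Finset.range m, ∫ x, ‖G a x‖ ^ 2 ∂W := by
  classical
  have e1 : ((∫ x, ‖∑ a ∈ Finset.range m, G a x‖ ^ 2 ∂W : ℝ) : ℂ) =
      ∑ a ∈ Finset.range m, ∑ b ∈ Finset.range m,
        ∫ x, G a x * starRingEnd ℂ (G b x) ∂W := by
    rw [← integral_complex_ofReal]
    have : ∀ x, ((‖∑ a ∈ Finset.range m, G a x‖ ^ 2 : ℝ) : ℂ) =
        ∑ a ∈ Finset.range m, ∑ b ∈ Finset.range m, G a x * starRingEnd ℂ (G b x) := by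
      intro x
      push_cast
      rw [← Complex.mul_conj', map_sum, Finset.sum_mul_sum]
    simp_rw [this]
    rw [integral_finsetSum]
    · refine Finset.sum_congr rfl fun a _ => ?_
      rw [integral_finsetSum]
      intro b _
      exact ((hG a).mul (hG b).conj).integrable W
    · intro a _
      exact integrable_finsetSum _ fun b _ => ((hG a).mul (hG b).conj).integrable W
  set n : ℕ → ℝ := fun a => ∫ x, ‖G a x‖ ^ 2 ∂W with hn
  have hn0 : ∀ a, 0 ≤ n a := fun a => integral_nonneg fun x => by positivity
  have e2 : ∀ a b, ‖∫ x, G a x * starRingEnd ℂ (G b x) ∂W‖ ≤ (n a + n b) / 2 := by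
    intro a b
    have : (n a + n b) / 2 = ∫ x, (‖G a x‖ ^ 2 + ‖G b x‖ ^ 2) / 2 ∂W := by
      rw [integral_div, integral_add ((hG a).integrable_pow 2 W) ((hG b).integrable_pow 2 W)]
    rw [this]
    refine norm_integral_le_of_norm_le
      ((((hG a).integrable_pow 2 W).add ((hG b).integrable_pow 2 W)).div_const 2)
      (Filter.Eventually.of_forall fun x => ?_)
    simp only [norm_mul, RCLike.norm_conj]
    nlinarith [sq_nonneg (‖G a x‖ - ‖G b x‖)]
  have e3 : ∫ x, ‖∑ a ∈ Finset.range m, G a x‖ ^ 2 ∂W ≤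
      ∑ a ∈ Finset.range m, ∑ b ∈ Finset.range m,
        if (R : ℤ) < |(a : ℤ) - b| then 0 else (n a + n b) / 2 := by
    have : ∫ x, ‖∑ a ∈ Finset.range m, G a x‖ ^ 2 ∂W =
        ‖((∫ x, ‖∑ a ∈ Finset.range m, G a x‖ ^ 2 ∂W : ℝ) : ℂ)‖ := by
      rw [Complex.norm_real, Real.norm_of_nonneg (integral_nonneg fun x => by positivity)]
    rw [this, e1]
    refine (norm_sum_le _ _).trans (Finset.sum_le_sum fun a ha => ?_)
    refine (norm_sum_le _ _).trans (Finset.sum_le_sum fun b hb => ?_)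
    split_ifs with hab
    · rw [h a (Finset.mem_range.1 ha) b (Finset.mem_range.1 hb) hab]; simp
    · exact e2 a b
  refine e3.trans ?_
  have e4 : (∑ a ∈ Finset.range m, ∑ b ∈ Finset.range m,
        if (R : ℤ) < |(a : ℤ) - b| then 0 else (n a + n b) / 2) =
      ∑ a ∈ Finset.range m, ∑ b ∈ Finset.range m,
        if (R : ℤ) < |(a : ℤ) - b| then 0 else n a := by
    have s1 : (∑ a ∈ Finset.range m, ∑ b ∈ Finset.range m,
        if (R : ℤ) < |(a : ℤ) - b| then 0 else (n a + n b) / 2) =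
        (∑ a ∈ Finset.range m, ∑ b ∈ Finset.range m,
          if (R : ℤ) < |(a : ℤ) - b| then 0 else n a / 2) +
        (∑ a ∈ Finset.range m, ∑ b ∈ Finset.range m,
          if (R : ℤ) < |(a : ℤ) - b| then 0 else n b / 2) := by
      rw [← Finset.sum_add_distrib]
      refine Finset.sum_congr rfl fun a _ => ?_
      rw [← Finset.sum_add_distrib]
      refine Finset.sum_congr rfl fun b _ => ?_
      split_ifs <;> ring
    have s2 : (∑ a ∈ Finset.range m, ∑ b ∈ Finset.range m,
          if (R : ℤ) < |(a : ℤ) - b| then 0 else n b / 2) =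
        (∑ a ∈ Finset.range m, ∑ b ∈ Finset.range m,
          if (R : ℤ) < |(a : ℤ) - b| then 0 else n a / 2) := by
      rw [Finset.sum_comm]
      refine Finset.sum_congr rfl fun a _ => Finset.sum_congr rfl fun b _ => ?_
      rw [abs_sub_comm]
    rw [s1, s2, ← Finset.sum_add_distrib]
    refine Finset.sum_congr rfl fun a _ => ?_
    rw [← Finset.sum_add_distrib]
    refine Finset.sum_congr rfl fun b _ => ?_
    split_ifs <;> ring
  rw [e4, Finset.mul_sum]
  refine Finset.sum_le_sum fun a _ => ?_
  simp_rw [← ite_not (p := (R : ℤ) < _)]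
  rw [← Finset.sum_filter, Finset.sum_const, nsmul_eq_mul]
  exact mul_le_mul_of_nonneg_right (card_near m R a) (hn0 a)

/-- Cauchy–Schwarz, squared form. -/
lemma cs_24 {f h : X → ℂ} (hf : BM f) (hh : BM h) :
    (∫ x, ‖f x‖ ^ 2 * ‖h x‖ ^ 4 ∂W) ^ 2 ≤
      (∫ x, ‖h x‖ ^ 2 * ‖f x‖ ^ 4 ∂W) * ∫ x, ‖h x‖ ^ 6 ∂W := by
  set a := ∫ x, ‖h x‖ ^ 2 * ‖f x‖ ^ 4 ∂W
  set b := ∫ x, ‖f x‖ ^ 2 * ‖h x‖ ^ 4 ∂W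
  set c := ∫ x, ‖h x‖ ^ 6 ∂W
  have key : ∀ t : ℝ, 0 ≤ a * (t * t) + (-2 * b) * t + c := by
    intro t
    have : a * (t * t) + (-2 * b) * t + c =
        ∫ x, (‖h x‖ * (t * ‖f x‖ ^ 2 - ‖h x‖ ^ 2)) ^ 2 ∂W := by
      have : ∀ x, (‖h x‖ * (t * ‖f x‖ ^ 2 - ‖h x‖ ^ 2)) ^ 2 =
          (‖h x‖ ^ 2 * ‖f x‖ ^ 4) * (t * t) + (‖f x‖ ^ 2 * ‖h x‖ ^ 4) * (-2 * t) + ‖h x‖ ^ 6 := by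
        intro x; ring
      simp_rw [this]
      rw [integral_add, integral_add, integral_mul_const, integral_mul_const]
      · ring
      · exact (hh.integrable_pow2 hf 2 4 W).mul_const _
      · exact (hf.integrable_pow2 hh 2 4 W).mul_const _
      · exact ((hh.integrable_pow2 hf 2 4 W).mul_const _).add
          ((hf.integrable_pow2 hh 2 4 W).mul_const _)
      · exact hh.integrable_pow 6 W
    rw [this]
    exact integral_nonneg fun x => by positivity
  have := discrim_le_zero key
  unfold discrim at this
  nlinarith

lemma holder_24 {f h : X → ℂ} (hf : BM f) (hh : BM h) {S T : ℝ} (hS : 0 ≤ S) (hT : 0 ≤ T)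
    (h1 : ∫ x, ‖f x‖ ^ 6 ∂W ≤ S ^ 3) (h2 : ∫ x, ‖h x‖ ^ 6 ∂W ≤ T ^ 3) :
    ∫ x, ‖f x‖ ^ 2 * ‖h x‖ ^ 4 ∂W ≤ S * T ^ 2 := by
  have hb : ∀ g : X → ℂ, BM g → ∫ x, ‖g x‖ ^ 6 ∂W = ∫ x, ‖g x‖ ^ 6 * 1 ∂W := by
    intro g _; simp
  have hpq : Real.HolderConjugate 3 (3 / 2) := by
    rw [Real.holderConjugate_iff]; norm_num
  have := integral_mul_le_Lp_mul_Lq_of_nonneg (μ := W) hpq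
    (f := fun x => ‖f x‖ ^ 2) (g := fun x => ‖h x‖ ^ 4)
    (Filter.Eventually.of_forall fun x => by positivity)
    (Filter.Eventually.of_forall fun x => by positivity) ?_ ?_
  · refine this.trans ?_
    have e1 : ∀ x, (‖f x‖ ^ 2) ^ (3 : ℝ) = ‖f x‖ ^ 6 := by
      intro x
      rw [show (3 : ℝ) = ((3 : ℕ) : ℝ) by norm_num, Real.rpow_natCast]; ring
    have e2 : ∀ x, (‖h x‖ ^ 4) ^ (3 / 2 : ℝ) = ‖h x‖ ^ 6 := by
      intro x
      rw [← Real.rpow_natCast, ← Real.rpow_mul (norm_nonneg _), ← Real.rpow_natCast]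
      norm_num
    simp_rw [e1, e2]
    have p0 : 0 ≤ ∫ x, ‖f x‖ ^ 6 ∂W := integral_nonneg fun x => by positivity
    have p1 : 0 ≤ ∫ x, ‖h x‖ ^ 6 ∂W := integral_nonneg fun x => by positivity
    have e3 : S = (S ^ 3) ^ (1 / 3 : ℝ) := by
      rw [← Real.rpow_natCast, ← Real.rpow_mul hS]; norm_num
    have e4 : T ^ 2 = (T ^ 3) ^ (1 / (3 / 2) : ℝ) := by
      rw [← Real.rpow_natCast, ← Real.rpow_natCast, ← Real.rpow_mul hT]; norm_num
    rw [e3, e4]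
    have hS3 : 0 ≤ S ^ 3 := by positivity
    gcongr
  · have e := (hf.integrable_pow 2 W).aestronglyMeasurable
    obtain ⟨C, hC⟩ := hf.2
    refine MemLp.of_bound e (C ^ 2) (Filter.Eventually.of_forall fun x => ?_)
    rw [Real.norm_of_nonneg (by positivity)]
    gcongr; exact hC x
  · have e := (hh.integrable_pow 4 W).aestronglyMeasurable
    obtain ⟨C, hC⟩ := hh.2
    refine MemLp.of_bound e (C ^ 4) (Filter.Eventually.of_forall fun x => ?_)
    rw [Real.norm_of_nonneg (by positivity)]
    gcongr; exact hC x

end Core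
end ConeDec

namespace ConeDec
section Core2
variable {X : Type*} [MeasurableSpace X]

/-- sum of `f` over the window `[p, p+m)` -/
def wf (f : ℤ → X → ℂ) (p : ℤ) (m : ℕ) (x : X) : ℂ := ∑ i ∈ Finset.range m, f (p + i) x

/-- sum of squared `L⁶` norms over the window `[p, p+m)` -/
def En (W : Measure X) (f : ℤ → X → ℂ) (p : ℤ) (m : ℕ) : ℝ :=
  ∑ i ∈ Finset.range m, (∫ x, ‖f (p + i) x‖ ^ 6 ∂W) ^ (1 / 3 : ℝ)

/-- the sextilinear orthogonality hypothesis -/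
def Orth (W : Measure X) (L : ℕ) (f : ℤ → X → ℂ) : Prop :=
  ∀ a b c a' b' c' : ℤ,
    (L : ℤ) * (6 + |a - b| + |c - b| + |a' - b| + |b' - b| + |c' - b|) <
      |(a - b) ^ 2 + (c - b) ^ 2 - (a' - b) ^ 2 - (b' - b) ^ 2 - (c' - b) ^ 2| →
    ∫ x, (f a x * f b x * f c x) * starRingEnd ℂ (f a' x * f b' x * f c' x) ∂W = 0

lemma sum_range_mul' {A : Type*} [AddCommMonoid A] (g : ℕ → A) (a b : ℕ) :
    ∑ i ∈ Finset.range (a * b), g i =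
      ∑ k ∈ Finset.range a, ∑ i ∈ Finset.range b, g (k * b + i) := by
  induction a with
  | zero => simp
  | succ a ih =>
    rw [Finset.sum_range_succ, ← ih, Nat.succ_mul, Finset.sum_range_add]

lemma wf_split (f : ℤ → X → ℂ) (p : ℤ) (a b : ℕ) (x : X) :
    wf f p (a * b) x = ∑ k ∈ Finset.range a, wf f (p + k * b) b x := by
  unfold wf
  rw [sum_range_mul']
  refine Finset.sum_congr rfl fun k _ => Finset.sum_congr rfl fun i _ => ?_
  push_cast
  rw [add_assoc]

lemma En_split (W : Measure X) (f : ℤ → X → ℂ) (p : ℤ) (a b : ℕ) :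
    En W f p (a * b) = ∑ k ∈ Finset.range a, En W f (p + k * b) b := by
  unfold En
  rw [sum_range_mul']
  refine Finset.sum_congr rfl fun k _ => Finset.sum_congr rfl fun i _ => ?_
  push_cast
  rw [add_assoc]

lemma En_nonneg (W : Measure X) (f : ℤ → X → ℂ) (p : ℤ) (a : ℕ) : 0 ≤ En W f p a :=
  Finset.sum_nonneg fun i _ => Real.rpow_nonneg (integral_nonneg fun x => by positivity) _

lemma BM.wf {f : ℤ → X → ℂ} (hf : ∀ j, BM (f j)) (p : ℤ) (m : ℕ) : BM (wf f p m) :=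
  BM.sum _ fun i _ => hf _

/-- separated windows: distances between `Q` and `n` -/
def Sep (Q n : ℕ) (p : ℤ) (m : ℕ) (p' : ℤ) (m' : ℕ) : Prop :=
  (∀ i < m, ∀ i' < m', (Q : ℤ) ≤ (p + i) - (p' + i') ∧ (p + i) - (p' + i') ≤ n) ∨
  (∀ i < m, ∀ i' < m', (Q : ℤ) ≤ (p' + i') - (p + i) ∧ (p' + i') - (p + i) ≤ n)

lemma Sep.symm {Q n : ℕ} {p : ℤ} {m : ℕ} {p' : ℤ} {m' : ℕ} (h : Sep Q n p m p' m') :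
    Sep Q n p' m' p m := by
  rcases h with h | h
  · right; intro i hi j hj; exact h j hj i hi
  · left; intro i hi j hj; exact h j hj i hi

lemma Sep.sub {Q n : ℕ} {p : ℤ} {k b : ℕ} {p' : ℤ} {m' : ℕ} (h : Sep Q n p (k * b) p' m')
    {a : ℕ} (ha : a < k) : Sep Q n (p + a * b) b p' m' := by
  have key : ∀ i < b, a * b + i < k * b := by
    intro i hi
    calc a * b + i < a * b + b := by omega
      _ = (a + 1) * b := by ring
      _ ≤ k * b := Nat.mul_le_mul_right _ ha
  rcases h with h | h
  · left; intro i hi j hj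
    have := h _ (key i hi) j hj
    push_cast at this
    rwa [← add_assoc] at this
  · right; intro i hi j hj
    have := h _ (key i hi) j hj
    push_cast at this
    rwa [← add_assoc] at this

variable (W : Measure X) [IsFiniteMeasure W]

/-- arithmetic heart of the orthogonality step -/
lemma arith_sep (L q Q H H' : ℤ) (hL : 0 ≤ L) (hq : 0 < q) (hQ : 0 < Q)
    (hH0 : 0 < H) (hH' : 0 < H') (hHH : H' * (q * Q) = H ^ 2) (hHn : H ≤ q * Q)
    (a b c a' b' c' : ℤ)
    (hs : (Q ≤ a - b ∧ a - b ≤ q * Q ∧ Q ≤ a' - b ∧ a' - b ≤ q * Q) ∨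
      (Q ≤ b - a ∧ b - a ≤ q * Q ∧ Q ≤ b - a' ∧ b - a' ≤ q * Q))
    (hc : |c - b| ≤ H) (hb' : |b' - b| ≤ H) (hc' : |c' - b| ≤ H)
    (hd : (2 + 6 * L) * q * H' ≤ |a - a'|) :
    L * (6 + |a - b| + |c - b| + |a' - b| + |b' - b| + |c' - b|) <
      |(a - b) ^ 2 + (c - b) ^ 2 - (a' - b) ^ 2 - (b' - b) ^ 2 - (c' - b) ^ 2| := by
  have hn : 1 ≤ q * Q := Order.one_le_iff_pos.2 (mul_pos hq hQ)
  have ha1 : |a - b| ≤ q * Q := by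
    rw [abs_le]; rcases hs with h | h <;> constructor <;> linarith
  have ha2 : |a' - b| ≤ q * Q := by
    rw [abs_le]; rcases hs with h | h <;> constructor <;> linarith
  have h1 : L * (6 + |a - b| + |c - b| + |a' - b| + |b' - b| + |c' - b|) ≤
      L * (11 * (q * Q)) := mul_le_mul_of_nonneg_left (by linarith) hL
  have sq : ∀ t : ℤ, |t| ≤ H → t ^ 2 ≤ H ^ 2 := fun t ht => by
    rw [← sq_abs t]; exact pow_le_pow_left₀ (abs_nonneg _) ht 2
  have hbig : (2 + 6 * L) * q * H' * (2 * Q) ≤ |(a - b) ^ 2 - (a' - b) ^ 2| := by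
    have : (a - b) ^ 2 - (a' - b) ^ 2 = (a - a') * ((a - b) + (a' - b)) := by ring
    rw [this, abs_mul]
    refine mul_le_mul hd ?_ (by positivity) (abs_nonneg _)
    rcases hs with h | h
    · exact le_trans (by linarith) (le_abs_self _)
    · exact le_trans (by linarith) (neg_le_abs _)
  have h2 : |(a - b) ^ 2 - (a' - b) ^ 2| - 2 * H ^ 2 ≤
      |(a - b) ^ 2 + (c - b) ^ 2 - (a' - b) ^ 2 - (b' - b) ^ 2 - (c' - b) ^ 2| := by
    have s1 := sq _ hc
    have s2 := sq _ hb'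
    have s3 := sq _ hc'
    have s4 := sq_nonneg (c - b)
    have s5 := sq_nonneg (b' - b)
    have s6 := sq_nonneg (c' - b)
    rw [sub_le_iff_le_add, abs_le]
    constructor
    · have := neg_abs_le ((a - b) ^ 2 + (c - b) ^ 2 - (a' - b) ^ 2 - (b' - b) ^ 2 - (c' - b) ^ 2)
      linarith
    · have := le_abs_self ((a - b) ^ 2 + (c - b) ^ 2 - (a' - b) ^ 2 - (b' - b) ^ 2 - (c' - b) ^ 2)
      linarith
  have h3 : L * (q * Q) ≤ L * (q * Q) * H' := le_mul_of_one_le_right (by positivity) hH'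
  have h4 : 0 < H' * (q * Q) := by positivity
  have h5 : 0 ≤ L * (q * Q) := by positivity
  have h6 : (2 + 6 * L) * q * H' * (2 * Q) = 4 * (H' * (q * Q)) + 12 * (L * (q * Q) * H') := by ring
  nlinarith

lemma orth_step (L : ℕ) {f : ℤ → X → ℂ} (hf : ∀ j, BM (f j)) (hO : Orth W L f)
    (q Q H H' m : ℕ) (hq : 0 < q) (hQ : 0 < Q) (hH0 : 0 < H) (hH' : 0 < H')
    (hHH : H' * (q * Q) = H ^ 2) (hHn : H ≤ q * Q) (p p' : ℤ)
    (hS : Sep Q (q * Q) p (m * H') p' H) :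
    ∫ x, ‖wf f p (m * H') x‖ ^ 2 * ‖wf f p' H x‖ ^ 4 ∂W ≤
      (2 * ((2 + 6 * L) * q + 1 : ℕ) + 1) * ∑ a ∈ Finset.range m,
        ∫ x, ‖wf f (p + a * H') H' x‖ ^ 2 * ‖wf f p' H x‖ ^ 4 ∂W := by
  set G : ℕ → X → ℂ := fun a x => wf f (p + a * H') H' x * wf f p' H x * wf f p' H x with hG
  have hGB : ∀ a, BM (G a) := fun a => ((BM.wf hf _ _).mul (BM.wf hf _ _)).mul (BM.wf hf _ _)
  have key := almost_orth W G hGB m ((2 + 6 * L) * q + 1) ?_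
  · have e1 : ∀ x, ‖∑ a ∈ Finset.range m, G a x‖ ^ 2 =
        ‖wf f p (m * H') x‖ ^ 2 * ‖wf f p' H x‖ ^ 4 := by
      intro x
      rw [wf_split, hG]
      simp only
      rw [← Finset.sum_mul, ← Finset.sum_mul, norm_mul, norm_mul]
      ring
    have e2 : ∀ a x, ‖G a x‖ ^ 2 = ‖wf f (p + a * H') H' x‖ ^ 2 * ‖wf f p' H x‖ ^ 4 := by
      intro a x
      rw [hG]
      simp only [norm_mul]
      ring
    simp_rw [e1, e2] at key
    exact key
  intro a ha b hb hab
  have e : ∀ a x, G a x = ∑ τ ∈ Finset.range H' ×ˢ (Finset.range H ×ˢ Finset.range H),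
      f (p + a * H' + τ.1) x * f (p' + τ.2.1) x * f (p' + τ.2.2) x := by
    intro a x
    rw [hG]
    simp only [wf]
    rw [mul_assoc, Finset.sum_mul_sum, Finset.sum_mul_sum, Finset.sum_product]
    refine Finset.sum_congr rfl fun i _ => ?_
    rw [Finset.sum_product]
    refine Finset.sum_congr rfl fun j _ => ?_
    rw [Finset.mul_sum]
    exact Finset.sum_congr rfl fun k _ => by ring
  have hB3 : ∀ i j k : ℤ, BM (fun x => f i x * f j x * f k x) := fun i j k =>
    ((hf i).mul (hf j)).mul (hf k)
  simp_rw [e, map_sum, Finset.sum_mul_sum]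
  rw [integral_finsetSum]
  swap
  · intro τ _
    exact integrable_finsetSum _ fun σ _ => ((hB3 _ _ _).mul (hB3 _ _ _).conj).integrable W
  refine Finset.sum_eq_zero fun τ hτ => ?_
  rw [integral_finsetSum]
  swap
  · intro σ _
    exact ((hB3 _ _ _).mul (hB3 _ _ _).conj).integrable W
  refine Finset.sum_eq_zero fun σ hσ => ?_
  obtain ⟨τ1, τ2, τ3⟩ := τ
  obtain ⟨σ1, σ2, σ3⟩ := σ
  simp only [Finset.mem_product, Finset.mem_range] at hτ hσ
  obtain ⟨t1, t2, t3⟩ := hτ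
  obtain ⟨s1, s2, s3⟩ := hσ
  refine hO _ _ _ _ _ _ ?_
  refine arith_sep L q Q H H' (by positivity) (by exact_mod_cast hq) (by exact_mod_cast hQ)
    (by exact_mod_cast hH0) (by exact_mod_cast hH') (by exact_mod_cast hHH)
    (by exact_mod_cast hHn) _ _ _ _ _ _ ?_ ?_ ?_ ?_ ?_
  · have A1 := hS.sub ha
    have A2 := hS.sub hb
    have lt1 : ∀ i < H', a * H' + i < m * H' := by
      intro i hi
      calc a * H' + i < a * H' + H' := by omega
        _ = (a + 1) * H' := by ring
        _ ≤ m * H' := Nat.mul_le_mul_right _ ha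
    have lt2 : ∀ i < H', b * H' + i < m * H' := by
      intro i hi
      calc b * H' + i < b * H' + H' := by omega
        _ = (b + 1) * H' := by ring
        _ ≤ m * H' := Nat.mul_le_mul_right _ hb
    rcases hS with h | h
    · left
      have B1 := h _ (lt1 _ t1) _ t2
      have B2 := h _ (lt2 _ s1) _ t2
      push_cast at B1 B2
      refine ⟨?_, ?_, ?_, ?_⟩ <;> linarith
    · right
      have B1 := h _ (lt1 _ t1) _ t2
      have B2 := h _ (lt2 _ s1) _ t2
      push_cast at B1 B2
      refine ⟨?_, ?_, ?_, ?_⟩ <;> linarith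
  · rw [abs_le]; constructor <;> push_cast <;> omega
  · rw [abs_le]; constructor <;> push_cast <;> omega
  · rw [abs_le]; constructor <;> push_cast <;> omega
  · push_cast at hab ⊢
    have hH1 : (0 : ℤ) < H' := by exact_mod_cast hH'
    have t1' : (τ1 : ℤ) < H' := by exact_mod_cast t1
    have s1' : (σ1 : ℤ) < H' := by exact_mod_cast s1
    have r0 : (0 : ℤ) ≤ (2 + 6 * L) * q := by positivity
    rcases lt_abs.1 hab with h | h
    · refine le_trans ?_ (le_abs_self _)
      nlinarith
    · refine le_trans ?_ (neg_le_abs _)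
      nlinarith

end Core2
end ConeDec

namespace ConeDec
section Core3
variable {X : Type*} [MeasurableSpace X] (W : Measure X) [IsFiniteMeasure W]

/-- overlap constant -/
def Rc (L q : ℕ) : ℝ := 2 * ((2 + 6 * L) * q + 1 : ℕ) + 1

lemma one_le_Rc (L q : ℕ) : 1 ≤ Rc L q := by
  unfold Rc
  have : (0 : ℝ) ≤ ((2 + 6 * L) * q + 1 : ℕ) := by positivity
  linarith

lemma chain (L : ℕ) {f : ℤ → X → ℂ} (hf : ∀ j, BM (f j)) (hO : Orth W L f)
    (q K : ℕ) (hq : 0 < q) (hK : 1 ≤ K) (B z : ℝ) (hB : 0 ≤ B) (hz : 1 ≤ z)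
    (IH : ∀ k < K, ∀ p, ∫ x, ‖wf f p (q ^ k) x‖ ^ 6 ∂W ≤
      B * z ^ (2 * k) * En W f p (q ^ k) ^ 3)
    (t : ℕ) : ∀ b k₁ : ℕ, 1 ≤ b → 2 ^ t * b ≤ K → k₁ < K → K ≤ k₁ + 2 * b →
      ∀ p p' : ℤ, Sep (q ^ (K - 1)) (q ^ K) p (q ^ k₁) p' (q ^ (K - b)) →
      ∫ x, ‖wf f p (q ^ k₁) x‖ ^ 2 * ‖wf f p' (q ^ (K - b)) x‖ ^ 4 ∂W ≤
        Rc L q ^ 2 * B * (z ^ (2 * K) / z ^ (b * t)) *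
          (En W f p (q ^ k₁) * En W f p' (q ^ (K - b)) ^ 2) := by
  have hR := one_le_Rc L q
  have hz0 : 0 < z := by linarith
  induction t with
  | zero =>
    intro b k₁ hb hbK hk hk2 p p' hS
    set S := En W f p (q ^ k₁) with hSd
    set T := En W f p' (q ^ (K - b)) with hTd
    have S0 : 0 ≤ S := En_nonneg _ _ _ _
    have T0 : 0 ≤ T := En_nonneg _ _ _ _
    set D := (B * z ^ (2 * K)) ^ (1 / 3 : ℝ) with hD
    have D0 : 0 ≤ D := by positivity
    have D3 : D ^ 3 = B * z ^ (2 * K) := by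
      rw [hD, ← Real.rpow_natCast, ← Real.rpow_mul (by positivity)]; norm_num
    have mono : ∀ k < K, B * z ^ (2 * k) ≤ D ^ 3 := by
      intro k hk
      rw [D3]
      gcongr
    have := holder_24 W (BM.wf hf p (q ^ k₁)) (BM.wf hf p' (q ^ (K - b)))
      (S := D * S) (T := D * T) (by positivity) (by positivity)
      ((IH k₁ hk p).trans (by rw [mul_pow]; gcongr; exact mono _ hk))
      ((IH (K - b) (by omega) p').trans (by rw [mul_pow]; gcongr; exact mono _ (by omega)))
    refine this.trans ?_
    have e : D * S * (D * T) ^ 2 = 1 ^ 2 * B * (z ^ (2 * K) / z ^ (b * 0)) * (S * T ^ 2) := by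
      rw [mul_zero, pow_zero, div_one]
      calc _ = D ^ 3 * (S * T ^ 2) := by ring
        _ = _ := by rw [D3]; ring
    rw [e]
    gcongr
  | succ t ih =>
    intro b k₁ hb hbK hk hk2 p p' hS
    have h2b : 2 * b ≤ K := by
      calc 2 * b ≤ 2 ^ (t + 1) * b := by
            rw [pow_succ]; nlinarith [Nat.one_le_two_pow (n := t)]
        _ ≤ K := hbK
    have hkk : q ^ k₁ = q ^ (k₁ - (K - 2 * b)) * q ^ (K - 2 * b) := by
      rw [← pow_add]; congr 1; omega
    have hqK : q * q ^ (K - 1) = q ^ K := by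
      rw [← pow_succ']; congr 1; omega
    set m := q ^ (k₁ - (K - 2 * b)) with hm
    set T := En W f p' (q ^ (K - b)) with hTd
    have T0 : 0 ≤ T := En_nonneg _ _ _ _
    rw [hkk] at hS ⊢
    have step := orth_step W L hf hO q (q ^ (K - 1)) (q ^ (K - b)) (q ^ (K - 2 * b)) m hq
      (by positivity) (by positivity) (by positivity)
      (by rw [hqK, ← pow_add, ← pow_mul]; congr 1; omega)
      (by rw [hqK]; exact Nat.pow_le_pow_right hq (by omega)) p p' (by rw [hqK]; exact hS)
    refine step.trans ?_
    change Rc L q * _ ≤ _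
    rw [En_split, Finset.sum_mul, Finset.mul_sum, Finset.mul_sum]
    refine Finset.sum_le_sum fun a ha => ?_
    rw [Finset.mem_range] at ha
    set Ea := En W f (p + a * (q ^ (K - 2 * b) : ℕ)) (q ^ (K - 2 * b)) with hEa
    have E0 : 0 ≤ Ea := En_nonneg _ _ _ _
    have hsub := (hS.sub ha).symm
    have i1 := ih (2 * b) (K - b) (by omega)
      (by calc 2 ^ t * (2 * b) = 2 ^ (t + 1) * b := by ring
            _ ≤ K := hbK) (by omega) (by omega) p' _ hsub
    have i2 := IH (K - b) (by omega) p'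
    have cs := cs_24 W (BM.wf hf (p + a * (q ^ (K - 2 * b) : ℕ)) (q ^ (K - 2 * b)))
      (BM.wf hf p' (q ^ (K - b)))
    have goal : ∫ x, ‖wf f (p + a * (q ^ (K - 2 * b) : ℕ)) (q ^ (K - 2 * b)) x‖ ^ 2 *
        ‖wf f p' (q ^ (K - b)) x‖ ^ 4 ∂W ≤
        Rc L q * B * (z ^ (2 * K) / z ^ (b * (t + 1))) * (Ea * T ^ 2) := by
      refine le_of_sq_le_sq (a := _) ?_ ?_
      · refine cs.trans ?_
        refine (mul_le_mul i1 i2 (integral_nonneg fun x => by positivity) (by positivity)).trans ?_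
        apply le_of_eq
        have e1 : z ^ (2 * (K - b)) = z ^ (2 * K) / z ^ (2 * b) := by
          rw [eq_div_iff (by positivity), ← pow_add]; congr 1; omega
        rw [e1]
        have e2 : z ^ (b * (t + 1)) = z ^ (b * t) * z ^ b := by rw [← pow_add]; ring_nf
        have e3 : z ^ (2 * b * t) = z ^ (b * t) * z ^ (b * t) := by rw [← pow_add]; ring_nf
        have e4 : z ^ (2 * b) = z ^ b * z ^ b := by rw [← pow_add]; ring_nf
        rw [e2, e3, e4]
        field_simp
        rw [← hTd, ← hEa]
        ring
      · positivity
    calc _ ≤ Rc L q * (Rc L q * B * (z ^ (2 * K) / z ^ (b * (t + 1))) * (Ea * T ^ 2)) := by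
          gcongr
      _ = _ := by ring

/-- pointwise broad–narrow inequality -/
lemma broad_narrow (q : ℕ) (hq : 0 < q) (u : ℕ → ℂ) :
    ‖∑ k ∈ Finset.range q, u k‖ ^ 6 ≤ 4 ^ 6 * ∑ k ∈ Finset.range q, ‖u k‖ ^ 6 +
      q ^ 9 * ∑ k ∈ Finset.range q, ∑ l ∈ Finset.range q,
        if k + 2 ≤ l ∨ l + 2 ≤ k then ‖u k‖ ^ 3 * ‖u l‖ ^ 3 else 0 := by
  have hne : (Finset.range q).Nonempty := ⟨0, Finset.mem_range.2 hq⟩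
  obtain ⟨k, hk, hmax⟩ := Finset.exists_max_image (Finset.range q) (fun k => ‖u k‖) hne
  have hq1 : (1 : ℝ) ≤ q := by exact_mod_cast hq
  have hterm : ∀ k l, 0 ≤ (if k + 2 ≤ l ∨ l + 2 ≤ k then ‖u k‖ ^ 3 * ‖u l‖ ^ 3 else 0) := by
    intro k l; split_ifs <;> positivity
  have hsum2 : 0 ≤ ∑ k ∈ Finset.range q, ∑ l ∈ Finset.range q,
        if k + 2 ≤ l ∨ l + 2 ≤ k then ‖u k‖ ^ 3 * ‖u l‖ ^ 3 else 0 :=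
    Finset.sum_nonneg fun k _ => Finset.sum_nonneg fun l _ => hterm k l
  by_cases h : ∃ l ∈ Finset.range q, (k + 2 ≤ l ∨ l + 2 ≤ k) ∧ ‖u k‖ ≤ q * ‖u l‖
  · obtain ⟨l, hl, hkl, hle⟩ := h
    have h1 : ‖∑ k ∈ Finset.range q, u k‖ ≤ q * ‖u k‖ := by
      refine (norm_sum_le _ _).trans ((Finset.sum_le_card_nsmul _ _ _ hmax).trans ?_)
      simp
    have h2 : ‖∑ k ∈ Finset.range q, u k‖ ^ 6 ≤ q ^ 9 * (‖u k‖ ^ 3 * ‖u l‖ ^ 3) := by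
      calc _ ≤ (q * ‖u k‖) ^ 6 := by gcongr
        _ = q ^ 6 * ‖u k‖ ^ 3 * ‖u k‖ ^ 3 := by ring
        _ ≤ q ^ 6 * ‖u k‖ ^ 3 * (q * ‖u l‖) ^ 3 := by gcongr
        _ = _ := by ring
    have h3 : ‖u k‖ ^ 3 * ‖u l‖ ^ 3 ≤ ∑ k ∈ Finset.range q, ∑ l ∈ Finset.range q,
        if k + 2 ≤ l ∨ l + 2 ≤ k then ‖u k‖ ^ 3 * ‖u l‖ ^ 3 else 0 := by
      refine le_trans ?_ (Finset.single_le_sum (f := fun k => ∑ l ∈ Finset.range q,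
        if k + 2 ≤ l ∨ l + 2 ≤ k then ‖u k‖ ^ 3 * ‖u l‖ ^ 3 else 0)
        (fun k _ => Finset.sum_nonneg fun l _ => hterm k l) hk)
      refine le_trans ?_ (Finset.single_le_sum (f := fun l =>
        if k + 2 ≤ l ∨ l + 2 ≤ k then ‖u k‖ ^ 3 * ‖u l‖ ^ 3 else 0)
        (fun l _ => hterm k l) hl)
      simp only [if_pos hkl, le_refl]
    have h4 : 0 ≤ ∑ k ∈ Finset.range q, ‖u k‖ ^ 6 := Finset.sum_nonneg fun _ _ => by positivity
    have h5 := mul_le_mul_of_nonneg_left h3 (by positivity : (0 : ℝ) ≤ q ^ 9)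
    linarith
  · push Not at h
    have h1 : ‖∑ k ∈ Finset.range q, u k‖ ≤ 4 * ‖u k‖ := by
      refine (norm_sum_le _ _).trans ?_
      have hb : ∀ l ∈ Finset.range q, ‖u l‖ ≤
          (if l ∈ Finset.Icc (k - 1) (k + 1) then ‖u k‖ else 0) + ‖u k‖ / q := by
        intro l hl
        split_ifs with hm
        · have h' : ‖u l‖ ≤ ‖u k‖ := hmax l hl
          have : 0 ≤ ‖u k‖ / q := by positivity
          linarith
        · rw [Finset.mem_Icc] at hm
          have := h l hl (by omega)
          rw [zero_add, le_div_iff₀ (by linarith)]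
          linarith
      refine (Finset.sum_le_sum hb).trans ?_
      rw [Finset.sum_add_distrib, Finset.sum_const, Finset.card_range, nsmul_eq_mul,
        mul_div_cancel₀ _ (by linarith), ← Finset.sum_filter, Finset.sum_const, nsmul_eq_mul]
      have : ((Finset.range q).filter (fun l => l ∈ Finset.Icc (k - 1) (k + 1))).card ≤ 3 := by
        refine (Finset.card_le_card (t := Finset.Icc (k - 1) (k + 1)) ?_).trans ?_
        · intro l hl; exact (Finset.mem_filter.1 hl).2
        · rw [Nat.card_Icc]; omega
      have : (((Finset.range q).filter (fun l => l ∈ Finset.Icc (k - 1) (k + 1))).card : ℝ) ≤ 3 := by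
        exact_mod_cast this
      nlinarith [norm_nonneg (u k)]
    have h2 : ‖u k‖ ^ 6 ≤ ∑ k ∈ Finset.range q, ‖u k‖ ^ 6 :=
      Finset.single_le_sum (f := fun k => ‖u k‖ ^ 6) (fun _ _ => by positivity) hk
    have h3 : 0 ≤ (q : ℝ) ^ 9 * ∑ k ∈ Finset.range q, ∑ l ∈ Finset.range q,
        if k + 2 ≤ l ∨ l + 2 ≤ k then ‖u k‖ ^ 3 * ‖u l‖ ^ 3 else 0 := by positivity
    calc _ ≤ (4 * ‖u k‖) ^ 6 := by gcongr
      _ = 4 ^ 6 * ‖u k‖ ^ 6 := by ring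
      _ ≤ 4 ^ 6 * ∑ k ∈ Finset.range q, ‖u k‖ ^ 6 := by gcongr
      _ ≤ _ := by linarith

lemma sum_cube_le (s : Finset ℕ) (e : ℕ → ℝ) (he : ∀ i, 0 ≤ e i) :
    ∑ i ∈ s, e i ^ 3 ≤ (∑ i ∈ s, e i) ^ 3 := by
  have hS : ∀ i ∈ s, e i ≤ ∑ i ∈ s, e i := fun i hi =>
    Finset.single_le_sum (fun i _ => he i) hi
  have h0 : 0 ≤ ∑ i ∈ s, e i := Finset.sum_nonneg fun i _ => he i
  calc ∑ i ∈ s, e i ^ 3 ≤ ∑ i ∈ s, e i * (∑ i ∈ s, e i) ^ 2 := by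
        refine Finset.sum_le_sum fun i hi => ?_
        have := pow_le_pow_left₀ (he i) (hS i hi) 2
        calc e i ^ 3 = e i * e i ^ 2 := by ring
          _ ≤ _ := mul_le_mul_of_nonneg_left this (he i)
    _ = _ := by rw [← Finset.sum_mul]; ring

lemma base_bound {f : ℤ → X → ℂ} (hf : ∀ j, BM (f j)) (p : ℤ) (m : ℕ) :
    ∫ x, ‖wf f p m x‖ ^ 6 ∂W ≤ m ^ 5 * En W f p m ^ 3 := by
  have h1 : ∀ x, ‖wf f p m x‖ ^ 6 ≤ m ^ 5 * ∑ i ∈ Finset.range m, ‖f (p + i) x‖ ^ 6 := by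
    intro x
    have h2 : ‖wf f p m x‖ ≤ ∑ i ∈ Finset.range m, ‖f (p + i) x‖ := norm_sum_le _ _
    calc _ ≤ (∑ i ∈ Finset.range m, ‖f (p + i) x‖) ^ 6 := by gcongr
      _ ≤ _ := by
        have h4 := pow_sum_div_card_le_sum_pow (s := Finset.range m)
          (f := fun i => ‖f (p + i) x‖) (n := 5) (fun i _ => norm_nonneg _)
        rcases Nat.eq_zero_or_pos m with rfl | hm
        · simp
        · rw [Finset.card_range, div_le_iff₀ (by positivity)] at h4
          rw [mul_comm]
          exact h4
  have h2 : ∫ x, ‖wf f p m x‖ ^ 6 ∂W ≤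
      ∫ x, m ^ 5 * ∑ i ∈ Finset.range m, ‖f (p + i) x‖ ^ 6 ∂W :=
    integral_mono ((BM.wf hf p m).integrable_pow 6 W)
      ((integrable_finsetSum _ fun i _ => (hf _).integrable_pow 6 W).const_mul _) h1
  refine h2.trans ?_
  rw [integral_const_mul, integral_finsetSum _ fun i _ => (hf _).integrable_pow 6 W]
  refine mul_le_mul_of_nonneg_left ?_ (by positivity)
  refine le_trans (le_of_eq ?_) (sum_cube_le _ _ fun i =>
    Real.rpow_nonneg (integral_nonneg fun x => by positivity) _)
  refine Finset.sum_congr rfl fun i _ => ?_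
  rw [← Real.rpow_natCast, ← Real.rpow_mul (integral_nonneg fun x => by positivity)]
  norm_num

lemma main_step (L : ℕ) {f : ℤ → X → ℂ} (hf : ∀ j, BM (f j)) (hO : Orth W L f)
    (q K s : ℕ) (hq : 0 < q) (hK : 2 ^ s ≤ K) (B z : ℝ) (hB : 0 ≤ B) (hz : 1 ≤ z)
    (hz1 : 2 * 4 ^ 6 ≤ z ^ 2) (hz2 : 2 * (q ^ 11 * Rc L q ^ 2) ≤ z ^ s)
    (IH : ∀ k < K, ∀ p, ∫ x, ‖wf f p (q ^ k) x‖ ^ 6 ∂W ≤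
      B * z ^ (2 * k) * En W f p (q ^ k) ^ 3) (p : ℤ) :
    ∫ x, ‖wf f p (q ^ K) x‖ ^ 6 ∂W ≤ B * z ^ (2 * K) * En W f p (q ^ K) ^ 3 := by
  have hK1 : 1 ≤ K := (Nat.one_le_two_pow).trans hK
  have hz0 : 0 < z := by linarith
  have hqK : q ^ K = q * q ^ (K - 1) := by
    rw [← pow_succ']; congr 1; omega
  set I : ℕ → X → ℂ := fun k => wf f (p + k * (q ^ (K - 1) : ℕ)) (q ^ (K - 1)) with hI
  set e : ℕ → ℝ := fun k => En W f (p + k * (q ^ (K - 1) : ℕ)) (q ^ (K - 1)) with he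
  have he0 : ∀ k, 0 ≤ e k := fun k => En_nonneg _ _ _ _
  have hIB : ∀ k, BM (I k) := fun k => BM.wf hf _ _
  set S := En W f p (q ^ K) with hS
  have S0 : 0 ≤ S := En_nonneg _ _ _ _
  have hSe : S = ∑ k ∈ Finset.range q, e k := by rw [hS, hqK, En_split]
  have heS : ∀ k ∈ Finset.range q, e k ≤ S := fun k hk => by
    rw [hSe]; exact Finset.single_le_sum (fun i _ => he0 i) hk
  set V := Rc L q ^ 2 * B * (z ^ (2 * K) / z ^ s) with hV
  have V0 : 0 ≤ V := by positivity
  have bil : ∀ k ∈ Finset.range q, ∀ l ∈ Finset.range q, (k + 2 ≤ l ∨ l + 2 ≤ k) →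
      ∫ x, ‖I k x‖ ^ 2 * ‖I l x‖ ^ 4 ∂W ≤ V * S ^ 3 := by
    intro k hk l hl hkl
    have hsep : Sep (q ^ (K - 1)) (q ^ K) (p + k * (q ^ (K - 1) : ℕ)) (q ^ (K - 1))
        (p + l * (q ^ (K - 1) : ℕ)) (q ^ (K - 1)) := by
      rw [hqK]
      have key : ∀ k l : ℕ, k < q → k ≥ l + 2 → ∀ i < q ^ (K - 1), ∀ i' < q ^ (K - 1),
          ((q ^ (K - 1) : ℕ) : ℤ) ≤
            (p + k * (q ^ (K - 1) : ℕ) + i) - (p + l * (q ^ (K - 1) : ℕ) + i') ∧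
          (p + k * (q ^ (K - 1) : ℕ) + i) - (p + l * (q ^ (K - 1) : ℕ) + i') ≤
            ((q * q ^ (K - 1) : ℕ) : ℤ) := by
        intro k l hk hkl i hi i' hi'
        generalize q ^ (K - 1) = Q at *
        have a1 : (k : ℤ) + 1 ≤ q := by exact_mod_cast hk
        have a2 : (l : ℤ) + 2 ≤ k := by exact_mod_cast hkl
        have a3 : (i : ℤ) < Q := by exact_mod_cast hi
        have a4 : (i' : ℤ) < Q := by exact_mod_cast hi'
        have a5 : (0 : ℤ) ≤ i := by positivity
        have a6 : (0 : ℤ) ≤ i' := by positivity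
        have a7 : (0 : ℤ) ≤ l := by positivity
        push_cast
        constructor
        · nlinarith
        · nlinarith
      rcases hkl with h | h
      · right; intro i hi i' hi'
        exact key l k (Finset.mem_range.1 hl) h i' hi' i hi
      · left; intro i hi i' hi'
        exact key k l (Finset.mem_range.1 hk) h i hi i' hi'
    have := chain W L hf hO q K hq hK1 B z hB hz IH s 1 (K - 1) le_rfl (by omega) (by omega)
      (by omega) _ _ hsep
    refine this.trans ?_
    rw [one_mul]
    change V * (e k * e l ^ 2) ≤ _
    have h1 := heS k hk
    have h2 := pow_le_pow_left₀ (he0 l) (heS l hl) 2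
    refine mul_le_mul_of_nonneg_left ?_ V0
    calc e k * e l ^ 2 ≤ S * S ^ 2 := mul_le_mul h1 h2 (by positivity) S0
      _ = S ^ 3 := by ring
  have bil3 : ∀ k ∈ Finset.range q, ∀ l ∈ Finset.range q, 
      ∫ x, (if k + 2 ≤ l ∨ l + 2 ≤ k then ‖I k x‖ ^ 3 * ‖I l x‖ ^ 3 else 0) ∂W ≤ V * S ^ 3 := by
    intro k hk l hl
    split_ifs with hkl
    · have a1 := bil k hk l hl hkl
      have a2 := bil l hl k hk hkl.symm
      have a3 : ∫ x, ‖I k x‖ ^ 3 * ‖I l x‖ ^ 3 ∂W ≤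
          ∫ x, (‖I k x‖ ^ 2 * ‖I l x‖ ^ 4 + ‖I l x‖ ^ 2 * ‖I k x‖ ^ 4) / 2 ∂W := by
        refine integral_mono ((hIB k).integrable_pow2 (hIB l) 3 3 W)
          ((((hIB k).integrable_pow2 (hIB l) 2 4 W).add
            ((hIB l).integrable_pow2 (hIB k) 2 4 W)).div_const 2) fun x => ?_
        have : 0 ≤ ‖I k x‖ ^ 2 * ‖I l x‖ ^ 2 * (‖I k x‖ - ‖I l x‖) ^ 2 := by positivity
        simp only
        nlinarith
      rw [integral_div, integral_add ((hIB k).integrable_pow2 (hIB l) 2 4 W)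
            ((hIB l).integrable_pow2 (hIB k) 2 4 W)] at a3
      linarith
    · simp only [integral_zero]
      positivity
  have hKL3 : ∀ k l, Integrable (fun x =>
      (if k + 2 ≤ l ∨ l + 2 ≤ k then ‖I k x‖ ^ 3 * ‖I l x‖ ^ 3 else 0)) W := by
    intro k l
    split_ifs
    · exact (hIB k).integrable_pow2 (hIB l) 3 3 W
    · exact integrable_zero _ _ _
  have hpt : ∀ x, ‖wf f p (q ^ K) x‖ ^ 6 ≤ 4 ^ 6 * ∑ k ∈ Finset.range q, ‖I k x‖ ^ 6 +
      q ^ 9 * ∑ k ∈ Finset.range q, ∑ l ∈ Finset.range q,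
        if k + 2 ≤ l ∨ l + 2 ≤ k then ‖I k x‖ ^ 3 * ‖I l x‖ ^ 3 else 0 := by
    intro x
    rw [hqK, wf_split]
    exact broad_narrow q hq fun k => I k x
  have i1 : Integrable (fun x => 4 ^ 6 * ∑ k ∈ Finset.range q, ‖I k x‖ ^ 6) W :=
    (integrable_finsetSum _ fun k _ => (hIB k).integrable_pow 6 W).const_mul _
  have i2 : Integrable (fun x => (q : ℝ) ^ 9 * ∑ k ∈ Finset.range q, ∑ l ∈ Finset.range q,
        if k + 2 ≤ l ∨ l + 2 ≤ k then ‖I k x‖ ^ 3 * ‖I l x‖ ^ 3 else 0) W :=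
    (integrable_finsetSum _ fun k _ => integrable_finsetSum _ fun l _ => hKL3 k l).const_mul _
  refine (integral_mono ((BM.wf hf p _).integrable_pow 6 W) (i1.add i2) hpt).trans ?_
  simp only [Pi.add_apply]
  rw [integral_add i1 i2, integral_const_mul, integral_const_mul,
    integral_finsetSum _ fun k _ => (hIB k).integrable_pow 6 W,
    integral_finsetSum _ fun k _ => integrable_finsetSum _ fun l _ => hKL3 k l]
  have n1 : ∑ k ∈ Finset.range q, ∫ x, ‖I k x‖ ^ 6 ∂W ≤ B * z ^ (2 * (K - 1)) * S ^ 3 := by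
    calc _ ≤ ∑ k ∈ Finset.range q, B * z ^ (2 * (K - 1)) * e k ^ 3 :=
          Finset.sum_le_sum fun k _ => IH (K - 1) (by omega) _
      _ ≤ _ := by
        rw [← Finset.mul_sum, hSe]
        exact mul_le_mul_of_nonneg_left (sum_cube_le _ _ he0) (by positivity)
  have n2 : ∑ k ∈ Finset.range q, ∫ x, (∑ l ∈ Finset.range q,
        if k + 2 ≤ l ∨ l + 2 ≤ k then ‖I k x‖ ^ 3 * ‖I l x‖ ^ 3 else 0) ∂W ≤
        q ^ 2 * (V * S ^ 3) := by
    calc _ ≤ ∑ k ∈ Finset.range q, ∑ l ∈ Finset.range q, V * S ^ 3 := by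
          refine Finset.sum_le_sum fun k hk => ?_
          rw [integral_finsetSum _ fun l _ => hKL3 k l]
          exact Finset.sum_le_sum fun l hl => bil3 k hk l hl
      _ = _ := by simp; ring
  have zK : z ^ (2 * K) = z ^ (2 * (K - 1)) * z ^ 2 := by
    rw [← pow_add]; congr 1; omega
  have m1 : 4 ^ 6 * (B * z ^ (2 * (K - 1)) * S ^ 3) ≤ B * z ^ (2 * K) * S ^ 3 / 2 := by
    rw [zK]
    have : 0 ≤ B * z ^ (2 * (K - 1)) * S ^ 3 := by positivity
    nlinarith
  have m2 : (q : ℝ) ^ 9 * (q ^ 2 * (V * S ^ 3)) ≤ B * z ^ (2 * K) * S ^ 3 / 2 := by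
    have : (q : ℝ) ^ 9 * (q ^ 2 * (V * S ^ 3)) =
        (q ^ 11 * Rc L q ^ 2) / z ^ s * (B * z ^ (2 * K) * S ^ 3) := by
      rw [hV]; field_simp
    rw [this]
    have h1 : (q ^ 11 * Rc L q ^ 2) / z ^ s ≤ 1 / 2 := by
      rw [div_le_iff₀ (by positivity)]; linarith
    have h2 : 0 ≤ B * z ^ (2 * K) * S ^ 3 := by positivity
    nlinarith
  have q9 : (0 : ℝ) ≤ q ^ 9 := by positivity
  have := mul_le_mul_of_nonneg_left n2 q9
  have := mul_le_mul_of_nonneg_left n1 (by norm_num : (0 : ℝ) ≤ 4 ^ 6)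
  linarith

end Core3

/-- Abstract `ℓ²` decoupling at exponent 6. -/
theorem core_decoupling (L : ℕ) (η : ℝ) (hη : 0 < η) :
    ∃ C : ℝ, 0 < C ∧ ∀ (X : Type) [MeasurableSpace X] (W : Measure X) [IsFiniteMeasure W]
      (f : ℤ → X → ℂ), (∀ j, BM (f j)) → Orth W L f → ∀ M : ℕ, 1 ≤ M →
      (∀ j : ℤ, (M : ℤ) ≤ j → ∀ x, f j x = 0) →
      ∫ x, ‖wf f 0 M x‖ ^ 6 ∂W ≤ C * (M : ℝ) ^ (6 * η) * En W f 0 M ^ 3 := by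
  -- choose q
  have t1 : Filter.Tendsto (fun q : ℕ => ((q : ℝ) ^ (3 * η))) Filter.atTop Filter.atTop :=
    (tendsto_rpow_atTop (by positivity)).comp tendsto_natCast_atTop_atTop
  obtain ⟨q, hq1, hq2⟩ := ((t1.eventually_ge_atTop (2 * 4 ^ 6)).and
    (Filter.eventually_ge_atTop 2)).exists
  set z : ℝ := (q : ℝ) ^ (3 * η) with hz
  have hz1 : 1 < z := by linarith
  have hz2 : 2 * 4 ^ 6 ≤ z ^ 2 := by nlinarith
  obtain ⟨s, hs⟩ := pow_unbounded_of_one_lt (2 * ((q : ℝ) ^ 11 * Rc L q ^ 2)) hz1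
  set B : ℝ := (q : ℝ) ^ (5 * 2 ^ s) with hB
  have hq0 : (0 : ℝ) < q := by positivity
  have hq1' : (1 : ℝ) ≤ q := by exact_mod_cast (by omega : 1 ≤ q)
  have hB0 : 0 < B := by positivity
  refine ⟨B * z ^ 2, by positivity, ?_⟩
  intro X _ W _ f hf hO M hM hfM
  have key : ∀ K : ℕ, ∀ p, ∫ x, ‖wf f p (q ^ K) x‖ ^ 6 ∂W ≤
      B * z ^ (2 * K) * En W f p (q ^ K) ^ 3 := by
    intro K
    induction K using Nat.strong_induction_on with
    | _ K IH =>
      intro p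
      by_cases hK : 2 ^ s ≤ K
      · exact main_step W L hf hO q K s (by omega) hK B z hB0.le hz1.le hz2 hs.le IH p
      · refine (base_bound W hf p _).trans ?_
        have := En_nonneg W f p (q ^ K)
        gcongr
        have a1 : (((q ^ K : ℕ) : ℝ)) ^ 5 ≤ B := by
          push_cast
          rw [hB, ← pow_mul]
          exact pow_le_pow_right₀ hq1' (by push Not at hK; nlinarith)
        have a2 : 1 ≤ z ^ (2 * K) := one_le_pow₀ hz1.le
        nlinarith
  set K := Nat.clog q M with hKd
  have hMK : M ≤ q ^ K := Nat.le_pow_clog (by omega) M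
  have ext : ∀ {A : Type} [AddCommMonoid A] (g : ℕ → A), (∀ i, M ≤ i → g i = 0) →
      ∑ i ∈ Finset.range (q ^ K), g i = ∑ i ∈ Finset.range M, g i := by
    intro A _ g hg
    symm
    refine Finset.sum_subset (Finset.range_mono hMK) fun i _ hi => hg i ?_
    simpa using hi
  have h1 := key K 0
  have e1 : wf f 0 (q ^ K) = wf f 0 M := by
    funext x
    unfold wf
    exact ext _ fun i hi => hfM _ (by rw [zero_add]; exact_mod_cast hi) x
  have e2 : En W f 0 (q ^ K) = En W f 0 M := by
    unfold En
    refine ext _ fun i hi => ?_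
    have : ∀ x, f (0 + (i : ℤ)) x = 0 := hfM _ (by rw [zero_add]; exact_mod_cast hi)
    simp only [this]
    simp
  rw [e1, e2] at h1
  refine h1.trans ?_
  have := En_nonneg W f 0 M
  refine mul_le_mul_of_nonneg_right ?_ (by positivity)
  have hzK : z ^ (2 * K) ≤ z ^ 2 * (M : ℝ) ^ (6 * η) := by
    have e3 : ∀ k : ℕ, z ^ (2 * k) = (((q ^ k : ℕ) : ℝ)) ^ (6 * η) := by
      intro k
      push_cast
      rw [hz, ← Real.rpow_natCast, ← Real.rpow_mul hq0.le, ← Real.rpow_natCast (q : ℝ) k,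
        ← Real.rpow_mul hq0.le]
      congr 1; push_cast; ring
    rcases Nat.eq_zero_or_pos K with h0 | h0
    · rw [h0]
      have : (1 : ℝ) ≤ (M : ℝ) ^ (6 * η) :=
        Real.one_le_rpow (by exact_mod_cast hM) (by positivity)
      have : 1 ≤ z ^ 2 := one_le_pow₀ hz1.le
      simp only [mul_zero, pow_zero]
      nlinarith
    · have hlt : q ^ (K - 1) ≤ M := by
        have : K - 1 < Nat.clog q M := by omega
        exact ((Nat.lt_clog_iff_pow_lt (by omega)).1 this).le
      have : z ^ (2 * K) = z ^ 2 * z ^ (2 * (K - 1)) := by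
        rw [← pow_add]; congr 1; omega
      rw [this, e3 (K - 1)]
      gcongr
  calc B * z ^ (2 * K) ≤ B * (z ^ 2 * (M : ℝ) ^ (6 * η)) := by gcongr
    _ = _ := by ring

end ConeDec

namespace ConeDec

/-- the character `e(t)` -/
def ee (t : ℝ) : ℂ := Complex.exp (2 * Real.pi * Complex.I * t)

lemma ee_add (s t : ℝ) : ee (s + t) = ee s * ee t := by
  unfold ee; rw [← Complex.exp_add]; congr 1; push_cast; ring

lemma ee_eq (t : ℝ) : ee t = Complex.exp ((2 * Real.pi * t : ℝ) * Complex.I) := by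
  unfold ee; congr 1; push_cast; ring

lemma norm_ee (t : ℝ) : ‖ee t‖ = 1 := by
  rw [ee_eq, Complex.norm_exp_ofReal_mul_I]

lemma conj_ee (t : ℝ) : starRingEnd ℂ (ee t) = ee (-t) := by
  rw [ee_eq, ee_eq, ← Complex.exp_conj, map_mul, Complex.conj_ofReal, Complex.conj_I]
  congr 1; push_cast; ring

lemma continuous_ee : Continuous ee := by
  unfold ee; fun_prop

lemma measurable_ee : Measurable ee := continuous_ee.measurable

/-- `F` has a spectral representation with frequencies in `T`. -/
def Spec (F : ℝ × ℝ → ℂ) (T : ℝ → ℝ → Prop) : Prop :=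
  ∃ (Ω : Type) (_ : MeasurableSpace Ω) (m : Measure Ω) (_ : IsFiniteMeasure m)
    (h : Ω → ℂ) (U V : Ω → ℝ), BM h ∧ Measurable U ∧ Measurable V ∧
    (∀ ω, h ω ≠ 0 → T (U ω) (V ω)) ∧
    ∀ s : ℝ × ℝ, F s = ∫ ω, h ω * ee (s.1 * U ω + s.2 * V ω) ∂m

lemma Spec.mono {F : ℝ × ℝ → ℂ} {T T' : ℝ → ℝ → Prop} (h : Spec F T)
    (hT : ∀ u v, T u v → T' u v) : Spec F T' := by
  obtain ⟨Ω, i1, m, i2, h, U, V, hh, hU, hV, hs, hF⟩ := h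
  exact ⟨Ω, i1, m, i2, h, U, V, hh, hU, hV, fun ω hω => hT _ _ (hs ω hω), hF⟩

lemma Spec.mul {F G : ℝ × ℝ → ℂ} {T T' : ℝ → ℝ → Prop} (hF : Spec F T) (hG : Spec G T') :
    Spec (fun s => F s * G s)
      (fun u v => ∃ u₁ v₁ u₂ v₂, T u₁ v₁ ∧ T' u₂ v₂ ∧ u = u₁ + u₂ ∧ v = v₁ + v₂) := by
  obtain ⟨Ω, i1, m, i2, h, U, V, hh, hU, hV, hs, hF⟩ := hF
  obtain ⟨Ω', i1', m', i2', h', U', V', hh', hU', hV', hs', hF'⟩ := hG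
  refine ⟨Ω × Ω', inferInstance, m.prod m', inferInstance, fun ω => h ω.1 * h' ω.2,
    fun ω => U ω.1 + U' ω.2, fun ω => V ω.1 + V' ω.2, ?_, by fun_prop, by fun_prop, ?_, ?_⟩
  · obtain ⟨C, hC⟩ := hh.2
    obtain ⟨D, hD⟩ := hh'.2
    exact BM.mul (f := fun ω : Ω × Ω' => h ω.1) (g := fun ω : Ω × Ω' => h' ω.2)
      ⟨hh.1.comp measurable_fst, C, fun x => hC _⟩ ⟨hh'.1.comp measurable_snd, D, fun x => hD _⟩
  · intro ω hω
    exact ⟨_, _, _, _, hs _ (left_ne_zero_of_mul hω), hs' _ (right_ne_zero_of_mul hω), rfl, rfl⟩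
  · intro s
    show F s * G s = _
    rw [hF, hF', ← integral_prod_mul]
    congr 1
    funext ω
    rw [show s.1 * (U ω.1 + U' ω.2) + s.2 * (V ω.1 + V' ω.2) =
      (s.1 * U ω.1 + s.2 * V ω.1) + (s.1 * U' ω.2 + s.2 * V' ω.2) by ring,
      ee_add (s.1 * U ω.1 + s.2 * V ω.1)]
    ring

lemma Spec.conj {F : ℝ × ℝ → ℂ} {T : ℝ → ℝ → Prop} (hF : Spec F T) :
    Spec (fun s => starRingEnd ℂ (F s)) (fun u v => T (-u) (-v)) := by
  obtain ⟨Ω, i1, m, i2, h, U, V, hh, hU, hV, hs, hF⟩ := hF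
  refine ⟨Ω, i1, m, i2, fun ω => starRingEnd ℂ (h ω), fun ω => - U ω, fun ω => - V ω,
    hh.conj, hU.neg, hV.neg, ?_, ?_⟩
  · intro ω hω
    rw [neg_neg, neg_neg]
    exact hs ω fun h0 => hω (by show starRingEnd ℂ (h ω) = 0; rw [h0, map_zero])
  · intro s
    show starRingEnd ℂ (F s) = _
    rw [hF, ← integral_conj]
    congr 1
    funext ω
    rw [map_mul, conj_ee]
    congr 2; ring

lemma Spec.bm {F : ℝ × ℝ → ℂ} {T : ℝ → ℝ → Prop} (hF : Spec F T) : BM F := by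
  obtain ⟨Ω, i1, m, i2, h, U, V, hh, hU, hV, hs, hF⟩ := hF
  obtain ⟨C, hC⟩ := hh.2
  have hb : ∀ s : ℝ × ℝ, ∀ ω, ‖h ω * ee (s.1 * U ω + s.2 * V ω)‖ ≤ C := by
    intro s ω
    rw [norm_mul, norm_ee, mul_one]; exact hC ω
  have hF' : F = fun s => ∫ ω, h ω * ee (s.1 * U ω + s.2 * V ω) ∂m := funext hF
  constructor
  · rw [hF']
    have : StronglyMeasurable (fun s : ℝ × ℝ => ∫ ω, h ω * ee (s.1 * U ω + s.2 * V ω) ∂m) := by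
      refine StronglyMeasurable.integral_prod_right
        (f := fun (s : ℝ × ℝ) ω => h ω * ee (s.1 * U ω + s.2 * V ω)) ?_
      refine Measurable.stronglyMeasurable ?_
      refine (hh.1.comp measurable_snd).mul (measurable_ee.comp ?_)
      fun_prop
    exact this.measurable
  · refine ⟨C * m.real Set.univ, fun s => ?_⟩
    rw [hF]
    exact norm_integral_le_of_norm_le_const (Filter.Eventually.of_forall (hb s))

lemma Spec.integral_eq_zero {F : ℝ × ℝ → ℂ} {T : ℝ → ℝ → Prop} (hF : Spec F T)
    (κ : Measure ℝ) [IsFiniteMeasure κ] (hκ : ∀ u : ℝ, 1 < |u| → ∫ s, ee (s * u) ∂κ = 0)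
    (hT : ∀ u v, T u v → 1 < |u| ∨ 1 < |v|) : ∫ s, F s ∂(κ.prod κ) = 0 := by
  obtain ⟨Ω, i1, m, i2, h, U, V, hh, hU, hV, hs, hF⟩ := hF
  simp_rw [hF]
  rw [integral_integral_swap]
  · refine integral_eq_zero_of_ae (Filter.Eventually.of_forall fun ω => ?_)
    simp only [Pi.zero_apply]
    rw [integral_const_mul]
    by_cases h0 : h ω = 0
    · rw [h0, zero_mul]
    · simp_rw [ee_add]
      rw [integral_prod_mul (fun s => ee (s * U ω)) (fun s => ee (s * V ω))]
      rcases hT _ _ (hs ω h0) with h1 | h1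
      · rw [hκ _ h1]; simp
      · rw [hκ _ h1]; simp
  · obtain ⟨C, hC⟩ := hh.2
    refine Integrable.of_bound (C := C) ?_ (Filter.Eventually.of_forall fun ω => ?_)
    · refine Measurable.aestronglyMeasurable ?_
      refine (hh.1.comp measurable_snd).mul (measurable_ee.comp ?_)
      fun_prop
    · simp only [Function.uncurry]
      rw [norm_mul, norm_ee, mul_one]; exact hC _

end ConeDec

namespace ConeDec
open scoped FourierTransform SchwartzMap in
lemma exists_kernel : ∃ κ : Measure ℝ, IsFiniteMeasure κ ∧ κ ≠ 0 ∧
    (∀ u : ℝ, 1 < |u| → ∫ s, ee (s * u) ∂κ = 0) ∧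
    ∫⁻ s, ENNReal.ofReal ((1 + 12 * |s|) ^ 30) ∂κ < ∞ := by
  let b : ContDiffBump (0 : ℝ) := ⟨1/8, 1/4, by norm_num, by norm_num⟩
  have hc : ∀ u : ℝ, HasCompactSupport (fun x : ℝ => ((b (x + u) : ℝ) : ℂ)) := by
    intro u
    have := (b.hasCompactSupport.comp_homeomorph (Homeomorph.addRight u)).comp_left
      (g := fun r : ℝ => (r : ℂ)) (by simp)
    exact this
  have hd : ∀ u : ℝ, ContDiff ℝ (↑(⊤ : ℕ∞)) (fun x : ℝ => ((b (x + u) : ℝ) : ℂ)) := by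
    intro u
    exact Complex.ofRealCLM.contDiff.comp (b.contDiff.comp (contDiff_id.add contDiff_const))
  let φ : ℝ → 𝓢(ℝ, ℂ) := fun u => (hc u).toSchwartzMap (hd u)
  have hφ : ∀ u x, φ u x = ((b (x + u) : ℝ) : ℂ) := fun u x => rfl
  have hF : ∀ u s : ℝ, (𝓕 (φ u)) s = ee (s * u) * (𝓕 (φ 0)) s := by
    intro u s
    rw [SchwartzMap.fourier_coe, SchwartzMap.fourier_coe, Real.fourier_real_eq,
      Real.fourier_real_eq, ← integral_const_mul]
    symm
    rw [← integral_add_right_eq_self _ u]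
    congr 1
    funext x
    rw [hφ, hφ, add_zero, Circle.smul_def, Circle.smul_def, Real.fourierChar_apply,
      Real.fourierChar_apply, smul_eq_mul, smul_eq_mul, ← mul_assoc, ee_eq, ← Complex.exp_add]
    congr 2
    push_cast; ring
  set G : 𝓢(ℝ, ℂ) := 𝓕 (φ 0) with hG
  have hGm : Measurable fun s => ENNReal.ofReal (‖G s‖ ^ 2) := by
    have := G.continuous.measurable
    fun_prop
  obtain ⟨B, hB0, hB⟩ := G.decay 0 0
  have hB' : ∀ s, ‖G s‖ ≤ B := fun s => by simpa using hB s
  have hmom : ∫⁻ s, ENNReal.ofReal ((1 + 12 * |s|) ^ 30)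
      ∂(volume.withDensity fun s => ENNReal.ofReal (‖G s‖ ^ 2)) < ∞ := by
    rw [lintegral_withDensity_eq_lintegral_mul _ hGm (by fun_prop)]
    have hi : Integrable (fun s : ℝ => B * 24 ^ 30 * (‖s‖ ^ 0 * ‖G s‖ + ‖s‖ ^ 30 * ‖G s‖)) :=
      ((G.integrable_pow_mul volume 0).add (G.integrable_pow_mul volume 30)).const_mul _
    refine lt_of_le_of_lt (lintegral_mono fun s => ?_) hi.lintegral_lt_top
    simp only [Pi.mul_apply]
    rw [← ENNReal.ofReal_mul (by positivity)]
    apply ENNReal.ofReal_le_ofReal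
    have h1 : (1 + 12 * |s|) ^ 30 ≤ 24 ^ 30 * (1 + |s| ^ 30) := by
      rcases le_total |s| 1 with h | h
      · calc (1 + 12 * |s|) ^ 30 ≤ 24 ^ 30 := by
              apply pow_le_pow_left₀ (by positivity); linarith
          _ ≤ _ := by
            have : 0 ≤ |s| ^ 30 := by positivity
            nlinarith
      · calc (1 + 12 * |s|) ^ 30 ≤ (24 * |s|) ^ 30 := by
              apply pow_le_pow_left₀ (by positivity); linarith
          _ ≤ _ := by
            rw [mul_pow]
            nlinarith
    calc ‖G s‖ ^ 2 * (1 + 12 * |s|) ^ 30 ≤ (B * ‖G s‖) * (24 ^ 30 * (1 + |s| ^ 30)) := by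
          apply mul_le_mul _ h1 (by positivity) (by positivity)
          rw [sq]; exact mul_le_mul_of_nonneg_right (hB' s) (norm_nonneg _)
      _ = _ := by rw [Real.norm_eq_abs]; ring
  refine ⟨volume.withDensity fun s => ENNReal.ofReal (‖G s‖ ^ 2), ?_, ?_, ?_, hmom⟩
  · constructor
    refine lt_of_le_of_lt ?_ hmom
    rw [← lintegral_one]
    refine lintegral_mono fun s => ?_
    rw [← ENNReal.ofReal_one]
    apply ENNReal.ofReal_le_ofReal
    apply one_le_pow₀
    have := abs_nonneg s
    linarith
  · intro h0
    have h1 := withDensity_eq_zero_iff hGm.aemeasurable |>.1 h0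
    have h2 : ∫ s, ‖G s‖ ^ 2 = 0 := by
      apply integral_eq_zero_of_ae
      filter_upwards [h1] with s hs
      simp only [Pi.zero_apply, ENNReal.ofReal_eq_zero] at hs ⊢
      exact le_antisymm hs (by positivity)
    rw [SchwartzMap.integral_norm_sq_fourier] at h2
    have h3 : 0 < ∫ x, ‖φ 0 x‖ ^ 2 := by
      have hcont : Continuous fun x => ‖φ 0 x‖ ^ 2 := by
        have := (φ 0).continuous
        fun_prop
      refine hcont.integral_pos_of_hasCompactSupport_nonneg_nonzero ?_ (fun x => by positivity) (x := 0) ?_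
      · exact (hc 0).norm.comp_left (g := fun r : ℝ => r ^ 2) (by simp)
      · rw [hφ]
        have : b (0 + 0) = 1 := b.one_of_mem_closedBall (by simp [b])
        rw [this]; simp
    linarith
  · intro u hu
    rw [integral_withDensity_eq_integral_toReal_smul hGm (by simp)]
    have key := SchwartzMap.integral_inner_fourier_fourier (φ 0) (φ u)
    have hz : ∫ x, inner ℂ (φ 0 x) (φ u x) = 0 := by
      apply integral_eq_zero_of_ae
      refine Filter.Eventually.of_forall fun x => ?_
      simp only [Pi.zero_apply]
      rw [hφ, hφ]
      by_cases hx : b (x + 0) = 0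
      · rw [hx]; simp
      · have hx2 : b (x + u) = 0 := by
          by_contra hx2
          have e1 : x + 0 ∈ Function.support b := hx
          have e2 : x + u ∈ Function.support b := hx2
          rw [b.support_eq, Metric.mem_ball, Real.dist_eq] at e1 e2
          simp only [b, sub_zero, add_zero] at e1 e2
          have : |u| ≤ |x + u| + |x| := by
            calc |u| = |(x + u) - x| := by ring_nf
              _ ≤ _ := abs_sub _ _
          linarith
        rw [hx2]; simp
    rw [hz] at key
    rw [← key]
    congr 1
    funext s
    rw [hF u s, ← hG, ENNReal.toReal_ofReal (by positivity)]
    simp only [RCLike.inner_apply, Complex.real_smul]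
    rw [mul_assoc, Complex.mul_conj, Complex.normSq_eq_norm_sq]
    ring

end ConeDec

namespace ConeDec
/-- amplitude in polar coordinates -/
def amp (g : ℝ × ℝ → ℂ) (p : ℝ × ℝ) : ℂ := (p.1 : ℂ) * g (p.1 * cos p.2, p.1 * sin p.2)

/-- phase in polar coordinates -/
def phs (x : EuclideanSpace ℝ (Fin 3)) (p : ℝ × ℝ) : ℝ :=
  p.1 * (x 0 * cos p.2 + x 1 * sin p.2 + x 2)

lemma measurable_amp {g : ℝ × ℝ → ℂ} (hg : Measurable g) : Measurable (amp g) := by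
  unfold amp
  exact (Complex.measurable_ofReal.comp measurable_fst).mul (hg.comp (by fun_prop))

lemma measurable_phs : Measurable (fun q : EuclideanSpace ℝ (Fin 3) × (ℝ × ℝ) => phs q.1 q.2) := by
  unfold phs
  fun_prop

lemma measurable_phs' (x : EuclideanSpace ℝ (Fin 3)) : Measurable (phs x) := by
  unfold phs
  fun_prop

lemma measurableSet_sector (r₀ r₁ α β : ℝ) :
    MeasurableSet (sector (Set.Icc r₀ r₁) (Set.Icc α β)) := by
  have : sector (Set.Icc r₀ r₁) (Set.Icc α β) =
      (fun p : ℝ × ℝ => (p.1 * cos p.2, p.1 * sin p.2)) '' (Set.Icc r₀ r₁ ×ˢ Set.Icc α β) := by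
    ext p
    simp only [sector, Set.mem_setOf_eq, Set.mem_image, Set.mem_prod, Prod.exists]
    constructor
    · rintro ⟨r, hr, φ, hφ, rfl⟩; exact ⟨r, φ, ⟨hr, hφ⟩, rfl⟩
    · rintro ⟨r, φ, ⟨hr, hφ⟩, rfl⟩; exact ⟨r, hr, φ, hφ, rfl⟩
  rw [this]
  exact ((isCompact_Icc.prod isCompact_Icc).image (by fun_prop)).isClosed.measurableSet

lemma coneExt_polar (g : ℝ × ℝ → ℂ) (r₀ r₁ α β : ℝ) (hr : 0 < r₀)
    (hα : -π < α) (hβ : β < π) (x : EuclideanSpace ℝ (Fin 3)) :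
    coneExt (sector (Set.Icc r₀ r₁) (Set.Icc α β)) g x =
      ∫ p in Set.Icc r₀ r₁ ×ˢ Set.Icc α β, amp g p * ee (phs x p) := by
  unfold coneExt
  rw [← integral_indicator (measurableSet_sector _ _ _ _), ← integral_comp_polarCoord_symm]
  have hsub : Set.Icc r₀ r₁ ×ˢ Set.Icc α β ⊆ polarCoord.target := by
    rintro ⟨r, φ⟩ ⟨h1, h2⟩
    simp only [polarCoord_target, Set.mem_prod, Set.mem_Ioi, Set.mem_Ioo, Set.mem_Icc] at *
    exact ⟨by linarith, by linarith, by linarith⟩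
  have hm : MeasurableSet (Set.Icc r₀ r₁ ×ˢ Set.Icc α β) := measurableSet_Icc.prod measurableSet_Icc
  have hsec : ∀ p ∈ polarCoord.target, polarCoord.symm p ∈ sector (Set.Icc r₀ r₁) (Set.Icc α β) ↔
      p ∈ Set.Icc r₀ r₁ ×ˢ Set.Icc α β := by
    intro p hp
    constructor
    · rintro ⟨r, h1, φ, h2, h3⟩
      have h4 : ((r, φ) : ℝ × ℝ) ∈ Set.Icc r₀ r₁ ×ˢ Set.Icc α β := ⟨h1, h2⟩
      have : p = (r, φ) := polarCoord.symm.injOn hp (hsub h4) (by rw [h3]; rfl)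
      rw [this]; exact h4
    · rintro ⟨h1, h2⟩
      exact ⟨p.1, h1, p.2, h2, rfl⟩
  have : ∀ p ∈ polarCoord.target, p.1 • (sector (Set.Icc r₀ r₁) (Set.Icc α β)).indicator
      (fun ξ : ℝ × ℝ => g ξ * Complex.exp (2 * Real.pi * Complex.I *
        (x 0 * ξ.1 + x 1 * ξ.2 + x 2 * Real.sqrt (ξ.1 ^ 2 + ξ.2 ^ 2)))) (polarCoord.symm p) =
      (Set.Icc r₀ r₁ ×ˢ Set.Icc α β).indicator (fun p => amp g p * ee (phs x p)) p := by
    intro p hp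
    by_cases h : p ∈ Set.Icc r₀ r₁ ×ˢ Set.Icc α β
    · rw [Set.indicator_of_mem h, Set.indicator_of_mem ((hsec p hp).2 h)]
      have hp0 : 0 ≤ p.1 := le_trans hr.le h.1.1
      have hs : polarCoord.symm p = (p.1 * cos p.2, p.1 * sin p.2) := rfl
      rw [hs]
      simp only
      have hq : Real.sqrt ((p.1 * cos p.2) ^ 2 + (p.1 * sin p.2) ^ 2) = p.1 := by
        rw [show (p.1 * cos p.2) ^ 2 + (p.1 * sin p.2) ^ 2 = p.1 ^ 2 * (sin p.2 ^ 2 + cos p.2 ^ 2) by ring,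
          sin_sq_add_cos_sq, mul_one, Real.sqrt_sq hp0]
      rw [hq, amp, ee, phs, Complex.real_smul, ← mul_assoc]
      congr 2
      push_cast; ring
    · rw [Set.indicator_of_notMem h, Set.indicator_of_notMem (fun h' => h ((hsec p hp).1 h')),
        smul_zero]
  rw [setIntegral_congr_fun polarCoord.open_target.measurableSet this]
  rw [setIntegral_indicator hm, Set.inter_eq_self_of_subset_right hsub]

lemma coneExt_interval (g : ℝ × ℝ → ℂ) (hg : BM g) (r₀ r₁ α β : ℝ) (hr : 0 < r₀)
    (hα : -π < α) (hβ : β < π) (hαβ : α ≤ β) (x : EuclideanSpace ℝ (Fin 3)) :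
    coneExt (sector (Set.Icc r₀ r₁) (Set.Icc α β)) g x =
      ∫ φ in α..β, ∫ r in Set.Icc r₀ r₁, amp g (r, φ) * ee (phs x (r, φ)) := by
  rw [coneExt_polar g r₀ r₁ α β hr hα hβ x, intervalIntegral.integral_of_le hαβ,
    ← integral_Icc_eq_integral_Ioc, Measure.volume_eq_prod, ← Measure.prod_restrict]
  rw [integral_prod_symm]
  obtain ⟨C, hC⟩ := hg.2
  rw [Measure.prod_restrict]
  refine Measure.integrableOn_of_bounded (M := r₁ * C) ?_ ?_ ?_
  · exact ((isCompact_Icc.prod isCompact_Icc).measure_lt_top).ne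
  · exact ((measurable_amp hg.1).mul (measurable_ee.comp (measurable_phs' x))).aestronglyMeasurable
  · refine (ae_restrict_iff' (measurableSet_Icc.prod measurableSet_Icc)).2
      (Filter.Eventually.of_forall fun p hp => ?_)
    rw [norm_mul, norm_ee, mul_one, amp, norm_mul, Complex.norm_real, Real.norm_eq_abs,
      abs_of_nonneg (hr.le.trans hp.1.1)]
    have := hp.1.1
    have := hp.1.2
    exact mul_le_mul hp.1.2 (hC _) (norm_nonneg _) (by linarith)

lemma coneExt_sum (g : ℝ × ℝ → ℂ) (hg : BM g) (r₀ r₁ α δ : ℝ) (hr : 0 < r₀)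
    (hα : -π < α) (hδ : 0 ≤ δ) (M : ℕ) (hβ : α + M * δ < π) (x : EuclideanSpace ℝ (Fin 3)) :
    coneExt (sector (Set.Icc r₀ r₁) (Set.Icc α (α + M * δ))) g x =
      ∑ j ∈ Finset.range M, coneExt (sector (Set.Icc r₀ r₁)
        (Set.Icc (α + j * δ) (α + ((j : ℝ) + 1) * δ))) g x := by
  rw [coneExt_interval g hg r₀ r₁ α _ hr hα hβ (by have : 0 ≤ M * δ := by positivity
                                                   linarith) x]
  obtain ⟨C, hC⟩ := hg.2
  have hK : ∀ a b : ℝ, IntervalIntegrable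
      (fun φ => ∫ r in Set.Icc r₀ r₁, amp g (r, φ) * ee (phs x (r, φ))) volume a b := by
    intro a b
    rw [intervalIntegrable_iff]
    refine Measure.integrableOn_of_bounded (M := r₁ * C * volume.real (Set.Icc r₀ r₁)) ?_ ?_ ?_
    · rw [Set.uIoc]; simp
    · refine Measurable.aestronglyMeasurable ?_
      refine StronglyMeasurable.measurable ?_
      refine StronglyMeasurable.integral_prod_right
        (f := fun φ r => amp g (r, φ) * ee (phs x (r, φ))) ?_
      refine Measurable.stronglyMeasurable ?_
      exact (((measurable_amp hg.1).mul (measurable_ee.comp (measurable_phs' x)))).comp measurable_swap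
    · refine Filter.Eventually.of_forall fun φ => ?_
      refine norm_setIntegral_le_of_norm_le_const measure_Icc_lt_top fun r hp => ?_
      rw [norm_mul, norm_ee, mul_one, amp, norm_mul, Complex.norm_real, Real.norm_eq_abs,
        abs_of_nonneg (hr.le.trans hp.1)]
      have := hp.1
      have := hp.2
      exact mul_le_mul hp.2 (hC _) (norm_nonneg _) (by linarith)
  have key := intervalIntegral.sum_integral_adjacent_intervals (a := fun j : ℕ => α + j * δ)
    (n := M) (f := fun φ => ∫ r in Set.Icc r₀ r₁, amp g (r, φ) * ee (phs x (r, φ)))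
    (μ := volume) (fun k _ => hK _ _)
  simp only [Nat.cast_zero, zero_mul, add_zero, Nat.cast_add, Nat.cast_one] at key
  rw [← key]
  refine Finset.sum_congr rfl fun j hj => ?_
  have hj : (j : ℝ) + 1 ≤ M := by exact_mod_cast Finset.mem_range.1 hj
  have h0 : 0 ≤ j * δ := by positivity
  have h1 : ((j : ℝ) + 1) * δ ≤ M * δ := by gcongr
  rw [coneExt_interval g hg r₀ r₁ _ _ hr (by linarith) (by linarith) (by linarith) x]

lemma measurable_coneExt (g : ℝ × ℝ → ℂ) (hg : BM g) (r₀ r₁ α β : ℝ) (hr : 0 < r₀)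
    (hα : -π < α) (hβ : β < π) :
    Measurable (coneExt (sector (Set.Icc r₀ r₁) (Set.Icc α β)) g) := by
  rw [funext (coneExt_polar g r₀ r₁ α β hr hα hβ)]
  refine StronglyMeasurable.measurable ?_
  refine StronglyMeasurable.integral_prod_right
    (f := fun (x : EuclideanSpace ℝ (Fin 3)) p => amp g p * ee (phs x p)) ?_
  refine Measurable.stronglyMeasurable ?_
  exact ((measurable_amp hg.1).comp measurable_snd).mul (measurable_ee.comp measurable_phs)

end ConeDec

namespace ConeDec

lemma phs_add (x v₁ v₂ : EuclideanSpace ℝ (Fin 3)) (s : ℝ × ℝ) (p : ℝ × ℝ) :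
    phs (x + (s.1 • v₁ + s.2 • v₂)) p = phs x p + (s.1 * phs v₁ p + s.2 * phs v₂ p) := by
  simp only [phs, PiLp.add_apply, PiLp.smul_apply, smul_eq_mul]
  ring

lemma spec_coneExt (g : ℝ × ℝ → ℂ) (hg : BM g) (r₀ r₁ α β : ℝ) (hr : 0 < r₀)
    (hα : -π < α) (hβ : β < π) (x v₁ v₂ : EuclideanSpace ℝ (Fin 3)) :
    Spec (fun s => coneExt (sector (Set.Icc r₀ r₁) (Set.Icc α β)) g (x + (s.1 • v₁ + s.2 • v₂)))
      (fun u v => ∃ p ∈ Set.Icc r₀ r₁ ×ˢ Set.Icc α β, u = phs v₁ p ∧ v = phs v₂ p) := by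
  have hm : MeasurableSet (Set.Icc r₀ r₁ ×ˢ Set.Icc α β) := measurableSet_Icc.prod measurableSet_Icc
  refine ⟨ℝ × ℝ, inferInstance, volume.restrict (Set.Icc r₀ r₁ ×ˢ Set.Icc α β), ?_,
    (Set.Icc r₀ r₁ ×ˢ Set.Icc α β).indicator (fun p => amp g p * ee (phs x p)),
    phs v₁, phs v₂, ?_, measurable_phs' _, measurable_phs' _, ?_, ?_⟩
  · exact ⟨by rw [Measure.restrict_apply_univ]; exact (isCompact_Icc.prod isCompact_Icc).measure_lt_top⟩
  · refine ⟨((measurable_amp hg.1).mul (measurable_ee.comp (measurable_phs' x))).indicator hm, ?_⟩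
    obtain ⟨C, hC⟩ := hg.2
    refine ⟨|r₁| * C, fun p => ?_⟩
    by_cases hp : p ∈ Set.Icc r₀ r₁ ×ˢ Set.Icc α β
    · rw [Set.indicator_of_mem hp, norm_mul, norm_ee, mul_one, amp, norm_mul, Complex.norm_real,
        Real.norm_eq_abs, abs_of_nonneg (hr.le.trans hp.1.1)]
      exact mul_le_mul (hp.1.2.trans (le_abs_self _)) (hC _) (norm_nonneg _) (abs_nonneg _)
    · rw [Set.indicator_of_notMem hp, norm_zero]
      exact mul_nonneg (abs_nonneg _) ((norm_nonneg _).trans (hC 0))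
  · intro p hp
    exact ⟨p, Set.mem_of_indicator_ne_zero hp, rfl, rfl⟩
  · intro s
    show coneExt _ _ _ = _
    rw [coneExt_polar g r₀ r₁ α β hr hα hβ]
    refine setIntegral_congr_fun hm fun p hp => ?_
    rw [Set.indicator_of_mem hp, phs_add, ee_add (phs x p), mul_assoc]

/-- frequency localization for the `j`-th piece -/
def Pf (M : ℕ) (j : ℤ) (u v : ℝ) : Prop :=
  ∃ w : ℝ, u = M * w ∧ |w - j| ≤ 9 ∧ |v - 2 * j * w + (j : ℝ) ^ 2| ≤ 25

lemma orth_arith (b j : ℤ) (w v : ℝ) (h1 : |w - j| ≤ 9)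
    (h2 : |v - 2 * j * w + (j : ℝ) ^ 2| ≤ 25) :
    |(v - 2 * b * w + (b : ℝ) ^ 2) - ((j : ℝ) - b) ^ 2| ≤ 25 + 18 * |(j : ℝ) - b| := by
  have e : (v - 2 * b * w + (b : ℝ) ^ 2) - ((j : ℝ) - b) ^ 2 =
      (v - 2 * j * w + (j : ℝ) ^ 2) + 2 * ((j : ℝ) - b) * (w - j) := by ring
  rw [e]
  refine (abs_add_le _ _).trans (add_le_add h2 ?_)
  rw [abs_mul, abs_mul, abs_two]
  have := abs_nonneg ((j : ℝ) - b)
  nlinarith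

lemma orth_of_spec (κ : Measure ℝ) [IsFiniteMeasure κ]
    (hκ : ∀ u : ℝ, 1 < |u| → ∫ s, ee (s * u) ∂κ = 0) (M : ℕ) (f : ℤ → ℝ × ℝ → ℂ)
    (hf : ∀ j : ℤ, 0 ≤ j → j < M → Spec (f j) (Pf M j))
    (hf0 : ∀ j : ℤ, ¬ (0 ≤ j ∧ j < M) → ∀ s, f j s = 0) :
    Orth (κ.prod κ) 60 f := by
  intro a b c a' b' c' hlt
  by_cases ha : 0 ≤ a ∧ a < M
  swap
  · simp [hf0 a ha]
  by_cases hb : 0 ≤ b ∧ b < M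
  swap
  · simp [hf0 b hb]
  by_cases hc : 0 ≤ c ∧ c < M
  swap
  · simp [hf0 c hc]
  by_cases ha' : 0 ≤ a' ∧ a' < M
  swap
  · simp [hf0 a' ha']
  by_cases hb' : 0 ≤ b' ∧ b' < M
  swap
  · simp [hf0 b' hb']
  by_cases hc' : 0 ≤ c' ∧ c' < M
  swap
  · simp [hf0 c' hc']
  have S := (((hf a ha.1 ha.2).mul (hf b hb.1 hb.2)).mul (hf c hc.1 hc.2)).mul
    (((hf a' ha'.1 ha'.2).mul (hf b' hb'.1 hb'.2)).mul (hf c' hc'.1 hc'.2)).conj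
  refine S.integral_eq_zero κ hκ ?_
  rintro u v ⟨u12, v12, u3, v3, ⟨u4, v4, u5, v5, ⟨u6, v6, u7, v7, ⟨wa, rfl, ha1, ha2⟩,
    ⟨wb, rfl, hb1, hb2⟩, rfl, rfl⟩, ⟨wc, rfl, hc1, hc2⟩, rfl, rfl⟩,
    ⟨u4', v4', u5', v5', ⟨u6', v6', u7', v7', ⟨wa', rfl, ha1', ha2'⟩,
    ⟨wb', rfl, hb1', hb2'⟩, rfl, hv1⟩, ⟨wc', rfl, hc1', hc2'⟩, hu3, hv3⟩, rfl, rfl⟩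
  by_contra hcon
  push Not at hcon
  obtain ⟨hu, hv⟩ := hcon
  have qa := orth_arith b a wa _ ha1 ha2
  have qb := orth_arith b b wb _ hb1 hb2
  have qc := orth_arith b c wc _ hc1 hc2
  have qa' := orth_arith b a' wa' _ ha1' ha2'
  have qb' := orth_arith b b' wb' _ hb1' hb2'
  have qc' := orth_arith b c' wc' _ hc1' hc2'
  rw [sub_self, abs_zero] at qb
  have hlt' : (60 : ℝ) * (6 + |(a : ℝ) - b| + |(c : ℝ) - b| + |(a' : ℝ) - b| + |(b' : ℝ) - b|
      + |(c' : ℝ) - b|) < |((a : ℝ) - b) ^ 2 + ((c : ℝ) - b) ^ 2 - ((a' : ℝ) - b) ^ 2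
        - ((b' : ℝ) - b) ^ 2 - ((c' : ℝ) - b) ^ 2| := by
    exact_mod_cast hlt
  -- combine
  set Sw := wa + wb + wc - wa' - wb' - wc' with hSw
  have hMw : |(M : ℝ) * Sw| ≤ 1 := by
    have : (M : ℝ) * Sw = M * wa + M * wb + M * wc + u3 := by rw [hSw]; linarith
    rw [this]; exact hu
  have hbM : (b : ℝ) ≤ M := by exact_mod_cast hb.2.le
  have hb0 : (0 : ℝ) ≤ b := by exact_mod_cast hb.1
  have hbw : |(b : ℝ) * Sw| ≤ 1 := by
    refine le_trans ?_ hMw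
    rw [abs_mul, abs_mul, abs_of_nonneg hb0, abs_of_nonneg (hb0.trans hbM)]
    exact mul_le_mul_of_nonneg_right hbM (abs_nonneg _)
  have e1 : (b : ℝ) * Sw = b * wa + b * wb + b * wc - b * wa' - b * wb' - b * wc' := by
    rw [hSw]; ring
  rw [e1] at hbw
  have n1 := abs_nonneg ((a : ℝ) - b)
  have n2 := abs_nonneg ((c : ℝ) - b)
  have n3 := abs_nonneg ((a' : ℝ) - b)
  have n4 := abs_nonneg ((b' : ℝ) - b)
  have n5 := abs_nonneg ((c' : ℝ) - b)
  rw [abs_le] at hbw hv qa qb qc qa' qb' qc'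
  refine absurd hlt' (not_lt.2 (abs_le.2 ⟨?_, ?_⟩)) <;> linarith [hbw.1, hbw.2, hv.1, hv.2, qa.1, qa.2, qb.1, qb.2, qc.1, qc.2, qa'.1, qa'.2, qb'.1, qb'.2, qc'.1, qc'.2]

lemma geom_arith (M : ℕ) (j : ℤ) (hM : 1 ≤ M) (hj : 0 ≤ j) (hjM : j < M) (A a ψ : ℝ) (hA : 1 ≤ A)
    (hAM : (M : ℝ) ^ 2 ≤ 4 * A ^ 2) (ha1 : 1 ≤ a) (ha2 : (a - 1) * (M : ℝ) ^ 2 ≤ 4)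
    (hψ1 : j / (M : ℝ) ≤ A * ψ) (hψ2 : A * ψ ≤ (j + 1) / (M : ℝ)) :
    Pf M j (M * (M * A * a * sin ψ)) (2 * M ^ 2 * A ^ 2 * a * (1 - cos ψ)) := by
  have hM0 : (0 : ℝ) < M := by exact_mod_cast hM
  have hM1 : (1 : ℝ) ≤ M := by exact_mod_cast hM
  have hj0 : (0 : ℝ) ≤ j := by exact_mod_cast hj
  have hjM' : (j : ℝ) + 1 ≤ M := by exact_mod_cast hjM
  obtain ⟨t, ht⟩ : ∃ t, t = A * ψ := ⟨_, rfl⟩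
  rw [← ht] at hψ1 hψ2
  rw [div_le_iff₀ hM0] at hψ1
  rw [le_div_iff₀ hM0] at hψ2
  have ht0 : 0 ≤ t := by
    by_contra h
    push Not at h
    nlinarith
  have ht1 : t ≤ 1 := by
    by_contra h
    push Not at h
    nlinarith
  have hA0 : 0 < A := by linarith
  have hψ : ψ = t / A := by rw [ht]; field_simp
  have hψ0 : 0 ≤ ψ := by rw [hψ]; positivity
  have hψ1' : ψ ≤ 1 := by rw [hψ, div_le_one hA0]; linarith
  have hs1 : sin ψ ≤ ψ := sin_le hψ0
  have hs2 : ψ - ψ ^ 3 ≤ sin ψ := by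
    rcases hψ0.eq_or_lt with h | h
    · rw [← h]; simp
    · have := sin_gt_sub_cube h
      have : 0 ≤ ψ ^ 3 := by positivity
      linarith
  have hs0 : 0 ≤ sin ψ := by
    refine le_trans ?_ hs2
    have : ψ ^ 3 ≤ ψ := by nlinarith [mul_nonneg hψ0 hψ0]
    linarith
  have hc1 : 2 * (1 - cos ψ) ≤ ψ ^ 2 := by
    have := one_sub_sq_div_two_le_cos (x := ψ); linarith
  have hc2 : ψ ^ 2 - ψ ^ 4 ≤ 2 * (1 - cos ψ) := by
    have h := cos_bound (x := ψ) (by rw [abs_of_nonneg hψ0]; exact hψ1')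
    rw [abs_of_nonneg hψ0, abs_le] at h
    have : 0 ≤ ψ ^ 4 := by positivity
    linarith [h.2]
  have hc0 : 0 ≤ 2 * (1 - cos ψ) := by have := cos_le_one ψ; linarith
  -- X = A sin ψ, Y = 2 A² (1 - cos ψ)
  obtain ⟨X, hX⟩ : ∃ X, X = A * sin ψ := ⟨_, rfl⟩
  obtain ⟨Y, hY⟩ : ∃ Y, Y = A ^ 2 * (2 * (1 - cos ψ)) := ⟨_, rfl⟩
  have hX1 : X ≤ t := by rw [hX, ht]; gcongr
  have hX0 : 0 ≤ X := by rw [hX]; positivity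
  have hM2A : (M : ℝ) ^ 2 * ψ ^ 2 ≤ 4 * t ^ 2 := by
    rw [ht, mul_pow]; nlinarith [sq_nonneg ψ]
  have ht2 : t ^ 2 ≤ 1 := by nlinarith
  have hX2 : (M : ℝ) ^ 2 * (t - X) ≤ 4 := by
    have h1 : t - X ≤ A * ψ ^ 3 := by
      rw [hX, ht]; nlinarith
    have h2 : (M : ℝ) ^ 2 * (A * ψ ^ 3) = t * ((M : ℝ) ^ 2 * ψ ^ 2) := by rw [ht]; ring
    have h3 : (M : ℝ) ^ 2 * (t - X) ≤ (M : ℝ) ^ 2 * (A * ψ ^ 3) := by gcongr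
    rw [h2] at h3
    have h4 : t * ((M : ℝ) ^ 2 * ψ ^ 2) ≤ 1 * (4 * 1) := by
      apply mul_le_mul ht1 _ (by positivity) (by norm_num)
      linarith
    linarith
  have hY1 : Y ≤ t ^ 2 := by rw [hY, ht, mul_pow]; gcongr
  have hY0 : 0 ≤ Y := by rw [hY]; positivity
  have hY2 : (M : ℝ) ^ 2 * (t ^ 2 - Y) ≤ 4 := by
    have h1 : t ^ 2 - Y ≤ A ^ 2 * ψ ^ 4 := by
      rw [hY, ht]; nlinarith [sq_nonneg A]
    have h2 : (M : ℝ) ^ 2 * (A ^ 2 * ψ ^ 4) = t ^ 2 * ((M : ℝ) ^ 2 * ψ ^ 2) := by rw [ht]; ring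
    have h3 : (M : ℝ) ^ 2 * (t ^ 2 - Y) ≤ (M : ℝ) ^ 2 * (A ^ 2 * ψ ^ 4) := by gcongr
    rw [h2] at h3
    have h4 : t ^ 2 * ((M : ℝ) ^ 2 * ψ ^ 2) ≤ 1 * (4 * 1) := by
      apply mul_le_mul ht2 _ (by positivity) (by norm_num)
      linarith
    linarith
  -- u1 = M a X, u2 = M² a Y
  have hu : |(M : ℝ) * (M * (a * X) - M * t)| ≤ 4 := by
    rw [abs_le]
    have e : (M : ℝ) * (M * (a * X) - M * t) = (a - 1) * M ^ 2 * X - M ^ 2 * (t - X) := by ring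
    rw [e]
    have p1 : 0 ≤ (a - 1) * (M : ℝ) ^ 2 * X := by
      have : 0 ≤ a - 1 := by linarith
      positivity
    have p2 : (a - 1) * (M : ℝ) ^ 2 * X ≤ 4 * 1 := by
      apply mul_le_mul ha2 (by linarith) hX0 (by norm_num)
    have p3 : 0 ≤ (M : ℝ) ^ 2 * (t - X) := mul_nonneg (by positivity) (by linarith)
    constructor <;> linarith
  have hv : |(M : ℝ) ^ 2 * (a * Y) - (M * t) ^ 2| ≤ 4 := by
    rw [abs_le]
    have e : (M : ℝ) ^ 2 * (a * Y) - (M * t) ^ 2 = (a - 1) * M ^ 2 * Y - M ^ 2 * (t ^ 2 - Y) := by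
      ring
    rw [e]
    have p1 : 0 ≤ (a - 1) * (M : ℝ) ^ 2 * Y := by
      have : 0 ≤ a - 1 := by linarith
      positivity
    have p2 : (a - 1) * (M : ℝ) ^ 2 * Y ≤ 4 * 1 := by
      apply mul_le_mul ha2 (by linarith) hY0 (by norm_num)
    have p3 : 0 ≤ (M : ℝ) ^ 2 * (t ^ 2 - Y) := mul_nonneg (by positivity) (by linarith)
    constructor <;> linarith
  have bnd : ∀ k : ℝ, 0 ≤ k → k ≤ M → |k * (M * (a * X) - M * t)| ≤ 4 := by
    intro k hk0 hk
    refine le_trans ?_ hu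
    rw [abs_mul, abs_mul, abs_of_nonneg hk0, abs_of_nonneg hM0.le]
    exact mul_le_mul_of_nonneg_right hk (abs_nonneg _)
  have b1 := bnd 1 zero_le_one hM1
  have b2 := bnd j hj0 (by linarith)
  have hdiff : |t * M - j| ≤ 1 := abs_le.2 ⟨by linarith, by linarith⟩
  refine ⟨M * (a * X), by rw [hX]; ring, ?_, ?_⟩
  · rw [one_mul] at b1
    rw [abs_le] at b1 hdiff ⊢
    constructor <;> linarith [b1.1, b1.2, hdiff.1, hdiff.2]
  · have e : 2 * (M : ℝ) ^ 2 * A ^ 2 * a * (1 - cos ψ) - 2 * j * (M * (a * X)) + (j : ℝ) ^ 2 =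
      ((M : ℝ) ^ 2 * (a * Y) - (M * t) ^ 2) - 2 * (j * (M * (a * X) - M * t)) + (t * M - j) ^ 2 := by
      rw [hY]; ring
    rw [e]
    have sq1 : (t * M - j) ^ 2 ≤ 1 := by
      rw [← sq_abs]; nlinarith [abs_nonneg (t * M - j)]
    have sq0 := sq_nonneg (t * M - j)
    rw [abs_le] at b2 hv ⊢
    constructor <;> linarith [b2.1, b2.2, hv.1, hv.2]

end ConeDec

namespace ConeDec

/-- first averaging direction -/
def vec1 (M : ℕ) (A r₀ φ₀ : ℝ) : EuclideanSpace ℝ (Fin 3) :=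
  !₂[-((M : ℝ) ^ 2 * A / r₀) * sin φ₀, ((M : ℝ) ^ 2 * A / r₀) * cos φ₀, 0]

/-- second averaging direction -/
def vec2 (M : ℕ) (A r₀ φ₀ : ℝ) : EuclideanSpace ℝ (Fin 3) :=
  !₂[-(2 * (M : ℝ) ^ 2 * A ^ 2 / r₀) * cos φ₀, -(2 * (M : ℝ) ^ 2 * A ^ 2 / r₀) * sin φ₀,
    2 * (M : ℝ) ^ 2 * A ^ 2 / r₀]

lemma phs_vec1 (M : ℕ) (A r₀ φ₀ : ℝ) (p : ℝ × ℝ) :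
    phs (vec1 M A r₀ φ₀) p = M * (M * A * (p.1 / r₀) * sin (p.2 - φ₀)) := by
  simp only [phs, vec1, sin_sub]
  simp
  ring

lemma phs_vec2 (M : ℕ) (A r₀ φ₀ : ℝ) (p : ℝ × ℝ) :
    phs (vec2 M A r₀ φ₀) p = 2 * M ^ 2 * A ^ 2 * (p.1 / r₀) * (1 - cos (p.2 - φ₀)) := by
  simp only [phs, vec2, cos_sub]
  simp
  ring

lemma norm_vec1 (M : ℕ) (A r₀ φ₀ : ℝ) (hA : 1 ≤ A) (hr : 1 ≤ r₀) :
    ‖vec1 M A r₀ φ₀‖ ≤ (M : ℝ) ^ 2 * A := by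
  have hA0 : 0 < A := by linarith
  have hr0 : 0 < r₀ := by linarith
  have h : ‖vec1 M A r₀ φ₀‖ ^ 2 = ((M : ℝ) ^ 2 * A / r₀) ^ 2 := by
    rw [EuclideanSpace.real_norm_sq_eq]
    simp only [Fin.sum_univ_three, vec1]
    simp
    have := sin_sq_add_cos_sq φ₀
    linear_combination ((M : ℝ) ^ 2 * A / r₀) ^ 2 * this
  have h2 : ‖vec1 M A r₀ φ₀‖ = (M : ℝ) ^ 2 * A / r₀ :=
    (sq_eq_sq₀ (norm_nonneg _) (by positivity)).1 h
  rw [h2]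
  exact div_le_self (by positivity) hr

lemma norm_vec2 (M : ℕ) (A r₀ φ₀ : ℝ) (hA : 1 ≤ A) (hr : 1 ≤ r₀) :
    ‖vec2 M A r₀ φ₀‖ ≤ 3 * ((M : ℝ) ^ 2 * A ^ 2) := by
  have hA0 : 0 < A := by linarith
  have hr0 : 0 < r₀ := by linarith
  have h : ‖vec2 M A r₀ φ₀‖ ^ 2 = 2 * (2 * (M : ℝ) ^ 2 * A ^ 2 / r₀) ^ 2 := by
    rw [EuclideanSpace.real_norm_sq_eq]
    simp only [Fin.sum_univ_three, vec2]
    simp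
    have := sin_sq_add_cos_sq φ₀
    linear_combination (2 * (M : ℝ) ^ 2 * A ^ 2 / r₀) ^ 2 * this
  have h3 : 2 * (M : ℝ) ^ 2 * A ^ 2 / r₀ ≤ 2 * (M : ℝ) ^ 2 * A ^ 2 := div_le_self (by positivity) hr
  have h4 : 0 ≤ 2 * (M : ℝ) ^ 2 * A ^ 2 / r₀ := by positivity
  refine (sq_le_sq₀ (norm_nonneg _) (by positivity)).1 ?_
  rw [h]
  nlinarith [sq_nonneg ((M : ℝ) ^ 2 * A ^ 2)]

lemma lint_eq {X : Type*} [MeasurableSpace X] (W : Measure X) [IsFiniteMeasure W] (f : X → ℂ)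
    (hf : BM f) : ∫⁻ x, (‖f x‖₊ : ℝ≥0∞) ^ (6 : ℝ) ∂W = ENNReal.ofReal (∫ x, ‖f x‖ ^ 6 ∂W) := by
  rw [ofReal_integral_eq_lintegral_ofReal (hf.integrable_pow 6 W)
    (Filter.Eventually.of_forall fun x => by positivity)]
  refine lintegral_congr fun x => ?_
  rw [ENNReal.ofReal_pow (norm_nonneg _), ofReal_norm, enorm_eq_nnnorm]
  norm_cast

/-- the `j`-th subsector -/
def sub (r₀ h φ₀ δ : ℝ) (j : ℕ) : Set (ℝ × ℝ) :=
  sector (Set.Icc r₀ (r₀ + h)) (Set.Icc (φ₀ + (j : ℝ) * δ) (φ₀ + ((j : ℝ) + 1) * δ))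

lemma local_dec (κ : Measure ℝ) [IsFiniteMeasure κ]
    (hκ : ∀ u : ℝ, 1 < |u| → ∫ s, ee (s * u) ∂κ = 0) (η : ℝ) (hη : 0 < η) :
    ∃ C : ℝ, 0 < C ∧ ∀ (M : ℕ) (A r₀ h φ₀ δ : ℝ), 1 ≤ M → 1 ≤ A → (M : ℝ) ^ 2 ≤ 4 * A ^ 2 →
      1 ≤ r₀ → h * (M : ℝ) ^ 2 ≤ 4 → 0 ≤ δ → A * (M * δ) = 1 → -π < φ₀ → φ₀ + M * δ < π →
      ∀ g : ℝ × ℝ → ℂ, BM g → ∀ x : EuclideanSpace ℝ (Fin 3),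
      ∫⁻ s : ℝ × ℝ, (‖coneExt (sector (Set.Icc r₀ (r₀ + h)) (Set.Icc φ₀ (φ₀ + M * δ))) g
        (x + (s.1 • vec1 M A r₀ φ₀ + s.2 • vec2 M A r₀ φ₀))‖₊ : ℝ≥0∞) ^ (6 : ℝ) ∂(κ.prod κ) ≤
      ENNReal.ofReal (C * (M : ℝ) ^ (6 * η)) * (∑ j ∈ Finset.range M,
        (∫⁻ s : ℝ × ℝ, (‖coneExt (sub r₀ h φ₀ δ j) g
          (x + (s.1 • vec1 M A r₀ φ₀ + s.2 • vec2 M A r₀ φ₀))‖₊ : ℝ≥0∞) ^ (6 : ℝ) ∂(κ.prod κ))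
            ^ (1 / 3 : ℝ)) ^ 3 := by
  obtain ⟨C, hC0, hC⟩ := core_decoupling 60 η hη
  refine ⟨C, hC0, ?_⟩
  intro M A r₀ h φ₀ δ hM hA hAM hr hh hδ hAδ hφ1 hφ2 g hg x
  have hr0 : 0 < r₀ := by linarith
  have hA0 : 0 < A := by linarith
  have hM0 : (0 : ℝ) < M := by exact_mod_cast hM
  let fn : ℕ → ℝ × ℝ → ℂ := fun j s => coneExt (sub r₀ h φ₀ δ j) g
    (x + (s.1 • vec1 M A r₀ φ₀ + s.2 • vec2 M A r₀ φ₀))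
  have hrange : ∀ j : ℕ, j < M → -π < φ₀ + (j : ℝ) * δ ∧ φ₀ + ((j : ℝ) + 1) * δ < π := by
    intro j hj
    have hj' : (j : ℝ) + 1 ≤ M := by exact_mod_cast hj
    have h0 : 0 ≤ j * δ := by positivity
    have h1 : ((j : ℝ) + 1) * δ ≤ M * δ := by gcongr
    constructor <;> linarith
  have hspec : ∀ j : ℕ, j < M → Spec (fn j) (Pf M j) := by
    intro j hj
    refine (spec_coneExt g hg r₀ (r₀ + h) _ _ hr0 (hrange j hj).1 (hrange j hj).2 x _ _).mono ?_
    rintro u v ⟨p, hp, rfl, rfl⟩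
    rw [phs_vec1, phs_vec2]
    have hd : A * δ = 1 / M := by field_simp; linarith
    refine geom_arith M j hM (by positivity) (by exact_mod_cast hj) A _ _ hA hAM ?_ ?_ ?_ ?_
    · rw [le_div_iff₀ hr0]; linarith [hp.1.1]
    · have h1 : p.1 / r₀ - 1 ≤ h := by
        rw [sub_le_iff_le_add, div_le_iff₀ hr0]
        have := hp.1.2
        have h2 := hp.1.1
        have : 0 ≤ h := by linarith
        nlinarith
      nlinarith [sq_nonneg (M : ℝ)]
    · have : A * ((j : ℝ) * δ) ≤ A * (p.2 - φ₀) := by gcongr; linarith [hp.2.1]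
      refine le_trans (le_of_eq ?_) this
      rw [show A * ((j : ℝ) * δ) = j * (A * δ) by ring, hd]
      simp; rfl
    · have : A * (p.2 - φ₀) ≤ A * (((j : ℝ) + 1) * δ) := by gcongr; linarith [hp.2.2]
      refine le_trans this (le_of_eq ?_)
      rw [show A * (((j : ℝ) + 1) * δ) = (j + 1) * (A * δ) by ring, hd]
      simp; rfl
  let f : ℤ → ℝ × ℝ → ℂ := fun j s => if 0 ≤ j ∧ j < M then fn j.toNat s else 0
  have hfn : ∀ j : ℕ, j < M → f j = fn j := by
    intro j hj
    funext s
    have : (0 : ℤ) ≤ j ∧ (j : ℤ) < M := ⟨by positivity, by exact_mod_cast hj⟩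
    simp only [f, if_pos this, Int.toNat_natCast]
  have hf0 : ∀ j : ℤ, ¬ (0 ≤ j ∧ j < M) → ∀ s, f j s = 0 := by
    intro j hj s
    simp only [f, if_neg hj]
  have hfs : ∀ j : ℤ, 0 ≤ j → j < M → Spec (f j) (Pf M j) := by
    intro j hj0 hj
    lift j to ℕ using hj0
    have hj' : j < M := by exact_mod_cast hj
    rw [hfn j hj']
    exact hspec j hj'
  have hBM : ∀ j, BM (f j) := by
    intro j
    by_cases hj : 0 ≤ j ∧ j < M
    · exact (hfs j hj.1 hj.2).bm
    · rw [show f j = fun _ => 0 from funext (hf0 j hj)]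
      exact ⟨measurable_const, 0, by simp⟩
  have hO := orth_of_spec κ hκ M f hfs hf0
  have main := hC (ℝ × ℝ) (κ.prod κ) f hBM hO M hM
    (fun j hj s => hf0 j (fun h' => absurd h'.2 (not_lt.2 hj)) s)
  have hwf : ∀ s, coneExt (sector (Set.Icc r₀ (r₀ + h)) (Set.Icc φ₀ (φ₀ + M * δ))) g
        (x + (s.1 • vec1 M A r₀ φ₀ + s.2 • vec2 M A r₀ φ₀)) = wf f 0 M s := by
    intro s
    rw [coneExt_sum g hg r₀ (r₀ + h) φ₀ δ hr0 hφ1 hδ M hφ2, wf]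
    refine Finset.sum_congr rfl fun j hj => ?_
    rw [zero_add, hfn j (Finset.mem_range.1 hj)]
    rfl
  have hbw : BM (wf f 0 M) := BM.sum _ (fun i _ => hBM _)
  simp_rw [hwf]
  rw [lint_eq _ _ hbw]
  refine (ENNReal.ofReal_le_ofReal main).trans (le_of_eq ?_)
  have hI : ∀ i, 0 ≤ ∫ s, ‖f i s‖ ^ 6 ∂(κ.prod κ) := fun i => integral_nonneg fun s => by positivity
  rw [En, ENNReal.ofReal_mul (by positivity), ENNReal.ofReal_pow (Finset.sum_nonneg fun i _ =>
    rpow_nonneg (hI _) _), ENNReal.ofReal_sum_of_nonneg (fun i _ => rpow_nonneg (hI _) _)]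
  congr 2
  refine Finset.sum_congr rfl fun j hj => ?_
  rw [← ENNReal.ofReal_rpow_of_nonneg (hI _) (by norm_num), ← lint_eq _ _ (hBM _), zero_add,
    hfn j (Finset.mem_range.1 hj)]

end ConeDec

namespace ConeDec

lemma minkowski_sum {α : Type*} [MeasurableSpace α] (m : Measure α) (f : ℕ → α → ℝ≥0∞)
    (M : ℕ) (hf : ∀ j < M, Measurable (f j)) :
    (∫⁻ y, (∑ j ∈ Finset.range M, f j y) ^ (3 : ℝ) ∂m) ^ (1 / 3 : ℝ) ≤
      ∑ j ∈ Finset.range M, (∫⁻ y, f j y ^ (3 : ℝ) ∂m) ^ (1 / 3 : ℝ) := by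
  induction M with
  | zero => simp
  | succ M ih =>
    have h1 := ih fun j hj => hf j (by omega)
    have hm : Measurable fun y => ∑ j ∈ Finset.range M, f j y :=
      Finset.measurable_fun_sum _ fun j hj => hf j (by have := Finset.mem_range.1 hj; omega)
    have h2 := ENNReal.lintegral_Lp_add_le (μ := m) (p := 3) hm.aemeasurable
      (hf M (by omega)).aemeasurable (by norm_num)
    simp only [Pi.add_apply] at h2
    simp only [Finset.sum_range_succ]
    exact h2.trans (by gcongr)

lemma minkowski_weighted {α : Type*} [MeasurableSpace α] (m : Measure α) (w : α → ℝ≥0∞)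
    (hw : Measurable w) (a : ℕ → α → ℝ≥0∞) (M : ℕ) (ha : ∀ j < M, Measurable (a j)) :
    ∫⁻ y, w y * (∑ j ∈ Finset.range M, a j y ^ (1 / 3 : ℝ)) ^ 3 ∂m ≤
      (∑ j ∈ Finset.range M, (∫⁻ y, w y * a j y ∂m) ^ (1 / 3 : ℝ)) ^ 3 := by
  have hs : Measurable fun y => (∑ j ∈ Finset.range M, a j y ^ (1 / 3 : ℝ)) :=
    Finset.measurable_fun_sum _ fun j hj => (ha j (Finset.mem_range.1 hj)).pow_const _
  have key := minkowski_sum (m.withDensity w) (fun j y => a j y ^ (1 / 3 : ℝ)) M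
    (fun j hj => (ha j hj).pow_const _)
  have h3 : ∀ z : ℝ≥0∞, (z ^ (1 / 3 : ℝ)) ^ (3 : ℝ) = z := by
    intro z
    rw [← ENNReal.rpow_mul]; norm_num
  simp only [h3] at key
  rw [lintegral_withDensity_eq_lintegral_mul _ hw (hs.pow_const _)] at key
  have e : ∑ j ∈ Finset.range M, (∫⁻ y, a j y ∂(m.withDensity w)) ^ (1 / 3 : ℝ) =
      ∑ j ∈ Finset.range M, (∫⁻ y, w y * a j y ∂m) ^ (1 / 3 : ℝ) := by
    refine Finset.sum_congr rfl fun j hj => ?_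
    rw [lintegral_withDensity_eq_lintegral_mul _ hw (ha j (Finset.mem_range.1 hj))]
    rfl
  rw [e] at key
  have k2 := ENNReal.rpow_le_rpow key (z := 3) (by norm_num)
  rw [h3] at k2
  simp only [Pi.mul_apply] at k2
  have e2 : ∀ z : ℝ≥0∞, z ^ (3 : ℝ) = z ^ 3 := fun z => by norm_cast
  simpa only [e2] using k2

abbrev E3 := EuclideanSpace ℝ (Fin 3)

lemma avg_eq (W : Measure (ℝ × ℝ)) [IsFiniteMeasure W] (V : ℝ × ℝ → E3) (hV : Measurable V)
    (w φ : E3 → ℝ≥0∞) (hw : Measurable w) (hφ : Measurable φ) :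
    ∫⁻ y, w y * ∫⁻ s, φ (y + V s) ∂W = ∫⁻ y, φ y * ∫⁻ s, w (y - V s) ∂W := by
  have e1 : ∀ y, w y * ∫⁻ s, φ (y + V s) ∂W = ∫⁻ s, w y * φ (y + V s) ∂W := fun y => by
    rw [lintegral_const_mul]
    exact hφ.comp (measurable_const.add hV)
  have e2 : ∀ y, φ y * ∫⁻ s, w (y - V s) ∂W = ∫⁻ s, φ y * w (y - V s) ∂W := fun y => by
    rw [lintegral_const_mul]
    exact hw.comp (measurable_const.sub hV)
  simp only [e1, e2]
  have m1 : AEMeasurable (Function.uncurry fun y s => w y * φ (y + V s)) (volume.prod W) :=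
    ((hw.comp measurable_fst).mul
      (hφ.comp (measurable_fst.add (hV.comp measurable_snd)))).aemeasurable
  have m2 : AEMeasurable (Function.uncurry fun y s => φ y * w (y - V s)) (volume.prod W) :=
    ((hφ.comp measurable_fst).mul
      (hw.comp (measurable_fst.sub (hV.comp measurable_snd)))).aemeasurable
  refine (lintegral_lintegral_swap m1).trans (Eq.trans ?_ (lintegral_lintegral_swap m2).symm)
  refine lintegral_congr fun s => ?_
  rw [← lintegral_add_right_eq_self (fun y => φ y * w (y - V s)) (V s)]
  refine lintegral_congr fun y => ?_
  rw [add_sub_cancel_right, mul_comm]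

/-- the weight -/
def wt (c : E3) (N : ℝ) (x : E3) : ℝ≥0∞ := ENNReal.ofReal ((1 + dist x c / N) ^ (-(30 : ℝ)))

lemma measurable_wt (c : E3) (N : ℝ) : Measurable (wt c N) := by
  unfold wt
  fun_prop

lemma wt_shift (c : E3) (N : ℝ) (hN : 0 < N) (x z : E3) :
    wt c N (x - z) ≤ ENNReal.ofReal ((1 + ‖z‖ / N) ^ 30) * wt c N x := by
  unfold wt
  rw [← ENNReal.ofReal_mul (by positivity)]
  apply ENNReal.ofReal_le_ofReal
  have hp : ∀ y : ℝ, 0 < y → y ^ (-(30 : ℝ)) = (y ^ 30)⁻¹ := fun y hy => by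
    rw [rpow_neg hy.le]; norm_cast
  rw [hp _ (by positivity), hp _ (by positivity)]
  rw [inv_le_iff_one_le_mul₀ (by positivity)]
  have h : 1 + dist x c / N ≤ (1 + ‖z‖ / N) * (1 + dist (x - z) c / N) := by
    have h1 : dist x c ≤ ‖z‖ + dist (x - z) c := by
      refine (dist_triangle x (x - z) c).trans ?_
      rw [dist_eq_norm x (x - z), sub_sub_cancel]
    have h2 : dist x c / N ≤ ‖z‖ / N + dist (x - z) c / N := by rw [← add_div]; gcongr
    have h3 : 0 ≤ ‖z‖ / N * (dist (x - z) c / N) := by positivity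
    nlinarith
  have h4 := pow_le_pow_left₀ (by positivity) h 30
  rw [mul_pow] at h4
  have h5 : 0 < (1 + dist x c / N) ^ 30 := by positivity
  calc (1 : ℝ) = ((1 + dist x c / N) ^ 30)⁻¹ * (1 + dist x c / N) ^ 30 := by field_simp
    _ ≤ ((1 + dist x c / N) ^ 30)⁻¹ * ((1 + ‖z‖ / N) ^ 30 * (1 + dist (x - z) c / N) ^ 30) := by gcongr
    _ = _ := by ring

/-- polynomial moment -/
def pm (s : ℝ × ℝ) : ℝ≥0∞ :=
  ENNReal.ofReal ((1 + 12 * |s.1|) ^ 30) * ENNReal.ofReal ((1 + 12 * |s.2|) ^ 30)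

lemma measurable_pm : Measurable pm := by
  unfold pm
  fun_prop

lemma wt_shift' (c : E3) (N : ℝ) (hN : 0 < N) (v₁ v₂ : E3) (h₁ : ‖v₁‖ ≤ 12 * N) (h₂ : ‖v₂‖ ≤ 12 * N)
    (x : E3) (s : ℝ × ℝ) (z : E3) (hz : ‖z‖ = ‖s.1 • v₁ + s.2 • v₂‖) :
    wt c N (x - z) ≤ pm s * wt c N x := by
  refine (wt_shift c N hN x z).trans ?_
  gcongr
  unfold pm
  rw [← ENNReal.ofReal_mul (by positivity), ← mul_pow]
  apply ENNReal.ofReal_le_ofReal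
  apply pow_le_pow_left₀ (by positivity)
  have h3 : ‖z‖ ≤ (12 * |s.1| + 12 * |s.2|) * N := by
    rw [hz]
    refine (norm_add_le _ _).trans ?_
    rw [norm_smul, norm_smul, Real.norm_eq_abs, Real.norm_eq_abs]
    have := mul_le_mul_of_nonneg_left h₁ (abs_nonneg s.1)
    have := mul_le_mul_of_nonneg_left h₂ (abs_nonneg s.2)
    linarith
  have h4 : ‖z‖ / N ≤ 12 * |s.1| + 12 * |s.2| := by rwa [div_le_iff₀ hN]
  have : 0 ≤ |s.1| * |s.2| := by positivity
  nlinarith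

lemma wt_upper (W : Measure (ℝ × ℝ)) (c : E3) (N : ℝ) (hN : 0 < N) (v₁ v₂ : E3)
    (h₁ : ‖v₁‖ ≤ 12 * N) (h₂ : ‖v₂‖ ≤ 12 * N) (x : E3) :
    ∫⁻ s, wt c N (x - (s.1 • v₁ + s.2 • v₂)) ∂W ≤ (∫⁻ s, pm s ∂W) * wt c N x := by
  rw [← lintegral_mul_const _ measurable_pm]
  exact lintegral_mono fun s => wt_shift' c N hN v₁ v₂ h₁ h₂ x s _ rfl

lemma pm_pos (s : ℝ × ℝ) : pm s ≠ 0 := by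
  unfold pm
  have h : ∀ t : ℝ, ENNReal.ofReal ((1 + 12 * |t|) ^ 30) ≠ 0 := fun t => by
    rw [ne_eq, ENNReal.ofReal_eq_zero, not_le]; positivity
  exact mul_ne_zero (h _) (h _)

lemma pm_top (s : ℝ × ℝ) : pm s ≠ ∞ := ENNReal.mul_ne_top ENNReal.ofReal_ne_top ENNReal.ofReal_ne_top

lemma wt_lower (W : Measure (ℝ × ℝ)) (c : E3) (N : ℝ) (hN : 0 < N) (v₁ v₂ : E3)
    (h₁ : ‖v₁‖ ≤ 12 * N) (h₂ : ‖v₂‖ ≤ 12 * N) (x : E3) :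
    (∫⁻ s, (pm s)⁻¹ ∂W) * wt c N x ≤ ∫⁻ s, wt c N (x - (s.1 • v₁ + s.2 • v₂)) ∂W := by
  rw [← lintegral_mul_const _ (show Measurable fun s => (pm s)⁻¹ from measurable_pm.inv)]
  refine lintegral_mono fun s => ?_
  have := wt_shift' c N hN v₁ v₂ h₁ h₂ (x - (s.1 • v₁ + s.2 • v₂)) s (-(s.1 • v₁ + s.2 • v₂))
    (norm_neg _)
  rw [sub_neg_eq_add, sub_add_cancel] at this
  calc (pm s)⁻¹ * wt c N x ≤ (pm s)⁻¹ * (pm s * wt c N (x - (s.1 • v₁ + s.2 • v₂))) := by gcongr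
    _ = _ := by rw [← mul_assoc, ENNReal.inv_mul_cancel (pm_pos s) (pm_top s), one_mul]

lemma assemble (W : Measure (ℝ × ℝ)) [IsFiniteMeasure W] (c : E3) (N : ℝ) (hN : 0 < N) (v₁ v₂ : E3)
    (h₁ : ‖v₁‖ ≤ 12 * N) (h₂ : ‖v₂‖ ≤ 12 * N) (φ : E3 → ℝ≥0∞) (hφ : Measurable φ)
    (M : ℕ) (φj : ℕ → E3 → ℝ≥0∞) (hφj : ∀ j < M, Measurable (φj j)) (K : ℝ≥0∞)
    (hloc : ∀ x, ∫⁻ s : ℝ × ℝ, φ (x + (s.1 • v₁ + s.2 • v₂)) ∂W ≤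
      K * (∑ j ∈ Finset.range M,
        (∫⁻ s : ℝ × ℝ, φj j (x + (s.1 • v₁ + s.2 • v₂)) ∂W) ^ (1 / 3 : ℝ)) ^ 3) :
    (∫⁻ s, (pm s)⁻¹ ∂W) * ∫⁻ x, φ x * wt c N x ≤
      K * (∫⁻ s, pm s ∂W) * (∑ j ∈ Finset.range M, (∫⁻ x, φj j x * wt c N x) ^ (1 / 3 : ℝ)) ^ 3 := by
  have hw := measurable_wt c N
  have hV : Measurable fun s : ℝ × ℝ => s.1 • v₁ + s.2 • v₂ := by fun_prop
  have haj : ∀ j < M, Measurable fun y => ∫⁻ s : ℝ × ℝ, φj j (y + (s.1 • v₁ + s.2 • v₂)) ∂W := by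
    intro j hj
    refine Measurable.lintegral_prod_right' (f := fun q : E3 × (ℝ × ℝ) =>
      φj j (q.1 + (q.2.1 • v₁ + q.2.2 • v₂))) ?_
    exact (hφj j hj).comp (measurable_fst.add (hV.comp measurable_snd))
  calc (∫⁻ s, (pm s)⁻¹ ∂W) * ∫⁻ x, φ x * wt c N x
      = ∫⁻ x, φ x * ((∫⁻ s, (pm s)⁻¹ ∂W) * wt c N x) := by
        rw [← lintegral_const_mul _ (show Measurable fun x => φ x * wt c N x from hφ.mul hw)]
        exact lintegral_congr fun x => by ring
    _ ≤ ∫⁻ x, φ x * ∫⁻ s, wt c N (x - (s.1 • v₁ + s.2 • v₂)) ∂W := by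
        refine lintegral_mono fun x => ?_
        gcongr
        exact wt_lower W c N hN v₁ v₂ h₁ h₂ x
    _ = ∫⁻ y, wt c N y * ∫⁻ s : ℝ × ℝ, φ (y + (s.1 • v₁ + s.2 • v₂)) ∂W :=
        (avg_eq W _ hV _ _ hw hφ).symm
    _ ≤ ∫⁻ y, K * (wt c N y * (∑ j ∈ Finset.range M,
        (∫⁻ s : ℝ × ℝ, φj j (y + (s.1 • v₁ + s.2 • v₂)) ∂W) ^ (1 / 3 : ℝ)) ^ 3) := by
        refine lintegral_mono fun y => ?_
        calc _ ≤ wt c N y * (K * (∑ j ∈ Finset.range M,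
              (∫⁻ s : ℝ × ℝ, φj j (y + (s.1 • v₁ + s.2 • v₂)) ∂W) ^ (1 / 3 : ℝ)) ^ 3) := by
              gcongr; exact hloc y
          _ = _ := by ring
    _ = K * ∫⁻ y, wt c N y * (∑ j ∈ Finset.range M,
        (∫⁻ s : ℝ × ℝ, φj j (y + (s.1 • v₁ + s.2 • v₂)) ∂W) ^ (1 / 3 : ℝ)) ^ 3 := by
        rw [lintegral_const_mul]
        exact hw.mul ((Finset.measurable_fun_sum _ fun j hj =>
          (haj j (Finset.mem_range.1 hj)).pow_const _).pow_const _)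
    _ ≤ K * (∑ j ∈ Finset.range M, (∫⁻ y, wt c N y *
        ∫⁻ s : ℝ × ℝ, φj j (y + (s.1 • v₁ + s.2 • v₂)) ∂W) ^ (1 / 3 : ℝ)) ^ 3 := by
        gcongr
        exact minkowski_weighted _ _ hw _ M haj
    _ ≤ K * (∑ j ∈ Finset.range M, ((∫⁻ s, pm s ∂W) * ∫⁻ x, φj j x * wt c N x) ^ (1 / 3 : ℝ)) ^ 3 := by
        gcongr with j hj
        have hj := hφj j (Finset.mem_range.1 hj)
        rw [avg_eq W _ hV _ _ hw hj, ← lintegral_const_mul _ (show Measurable fun x => φj j x * wt c N x from hj.mul hw)]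
        refine lintegral_mono fun x => ?_
        calc _ ≤ φj j x * ((∫⁻ s, pm s ∂W) * wt c N x) := by
              gcongr; exact wt_upper W c N hN v₁ v₂ h₁ h₂ x
          _ = _ := by ring
    _ = _ := by
        simp_rw [ENNReal.mul_rpow_of_nonneg _ _ (show (0 : ℝ) ≤ 1 / 3 by norm_num)]
        rw [← Finset.mul_sum, mul_pow, mul_assoc]
        congr 2
        rw [← ENNReal.rpow_natCast, ← ENNReal.rpow_mul]; norm_num

lemma pm_int (κ : Measure ℝ) [IsFiniteMeasure κ]
    (h : ∫⁻ s, ENNReal.ofReal ((1 + 12 * |s|) ^ 30) ∂κ < ∞) : ∫⁻ s, pm s ∂(κ.prod κ) < ∞ := by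
  unfold pm
  rw [lintegral_prod_mul (f := fun s => ENNReal.ofReal ((1 + 12 * |s|) ^ 30))
    (g := fun s => ENNReal.ofReal ((1 + 12 * |s|) ^ 30)) (by fun_prop) (by fun_prop)]
  exact ENNReal.mul_lt_top h h

lemma pm_inv_int (κ : Measure ℝ) [IsFiniteMeasure κ] (h : κ ≠ 0) :
    ∫⁻ s, (pm s)⁻¹ ∂(κ.prod κ) ≠ 0 := by
  intro h0
  rw [lintegral_eq_zero_iff (show Measurable fun s => (pm s)⁻¹ from measurable_pm.inv)] at h0
  have h1 : ∀ᵐ s ∂(κ.prod κ), False := by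
    filter_upwards [h0] with s hs
    simp only [Pi.zero_apply, ENNReal.inv_eq_zero] at hs
    exact pm_top s hs
  rw [Filter.eventually_false_iff_eq_bot, ae_eq_bot] at h1
  have h2 : (κ.prod κ) Set.univ = 0 := by rw [h1]; rfl
  rw [← Set.univ_prod_univ, Measure.prod_prod, mul_self_eq_zero, Measure.measure_univ_eq_zero] at h2
  exact h h2

end ConeDec

theorem cone_sector_decoupling_step (ν μ : ℝ) (hν : 0 < ν) (hμ : 0 < μ)
    (h1 : 2 * μ + ν ≤ 1) (h2 : ν ≤ 2 * μ) :
    ∀ ε > (0 : ℝ), ∃ C > (0 : ℝ), ∀ N : ℝ, 1 < N →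
      ∀ r₀ φ₀ : ℝ, 1 ≤ r₀ → r₀ + N ^ (-ν) ≤ 2 →
        -(Real.pi / 2) < φ₀ → φ₀ + N ^ (-μ) < Real.pi / 2 →
        ∀ g : ℝ × ℝ → ℂ, Measurable g → (∃ M : ℝ, ∀ ξ, ‖g ξ‖ ≤ M) →
          ∀ c : EuclideanSpace ℝ (Fin 3),
            wNorm6 (coneExt (sector (Set.Icc r₀ (r₀ + N ^ (-ν)))
                (Set.Icc φ₀ (φ₀ + N ^ (-μ)))) g) c N ≤
              ENNReal.ofReal (C * N ^ (ν * ε)) *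
                (∑ j ∈ Finset.range ⌈N ^ (ν / 2)⌉₊,
                  wNorm6 (coneExt (sector (Set.Icc r₀ (r₀ + N ^ (-ν)))
                      (Set.Icc (φ₀ + (j : ℝ) * (N ^ (-μ) / (⌈N ^ (ν / 2)⌉₊ : ℝ)))
                        (φ₀ + ((j : ℝ) + 1) * (N ^ (-μ) / (⌈N ^ (ν / 2)⌉₊ : ℝ))))) g) c N ^
                    2) ^ (1 / 2 : ℝ) := by
  intro ε hε
  obtain ⟨κ, hfin, hκ0, hκ, hmom⟩ := ConeDec.exists_kernel
  obtain ⟨K, hK0, hK⟩ := ConeDec.local_dec κ hκ ε hε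
  have hC1 := ConeDec.pm_int κ hmom
  have hc0 := ConeDec.pm_inv_int κ hκ0
  obtain ⟨c₀, hc₀⟩ : ∃ z, z = ∫⁻ s, (ConeDec.pm s)⁻¹ ∂(κ.prod κ) := ⟨_, rfl⟩
  obtain ⟨c₁, hc₁⟩ : ∃ z, z = ∫⁻ s, ConeDec.pm s ∂(κ.prod κ) := ⟨_, rfl⟩
  rw [← hc₁] at hC1
  rw [← hc₀] at hc0
  have hq : c₀⁻¹ * c₁ ≠ ∞ := ENNReal.mul_ne_top (ENNReal.inv_ne_top.2 hc0) hC1.ne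
  obtain ⟨q, hq0, hqe⟩ : ∃ q : ℝ, 0 ≤ q ∧ c₀⁻¹ * c₁ = ENNReal.ofReal q :=
    ⟨_, ENNReal.toReal_nonneg, (ENNReal.ofReal_toReal hq).symm⟩
  refine ⟨(q * (K * 2 ^ (6 * ε))) ^ (1 / 6 : ℝ) + 1, by positivity, ?_⟩
  intro N hN r₀ φ₀ hr1 hr2 hφ1 hφ2 g hgm hgb c
  have hN0 : 0 < N := by linarith
  have hg : ConeDec.BM g := ⟨hgm, hgb⟩
  obtain ⟨M, hMdef⟩ : ∃ M : ℕ, M = ⌈N ^ (ν / 2)⌉₊ := ⟨_, rfl⟩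
  rw [← hMdef]
  have hX1 : 1 ≤ N ^ (ν / 2) := Real.one_le_rpow hN.le (by positivity)
  have hM1 : 1 ≤ M := by
    rw [hMdef]; exact Nat.one_le_ceil_iff.2 (by linarith)
  have hM0 : (0 : ℝ) < M := by exact_mod_cast hM1
  have hM2 : (M : ℝ) ≤ 2 * N ^ (ν / 2) := by
    have := Nat.ceil_lt_add_one (a := N ^ (ν / 2)) (by positivity)
    rw [← hMdef] at this
    linarith
  have hMsq : (M : ℝ) ^ 2 ≤ 4 * N ^ ν := by
    have h3 : (M : ℝ) ^ 2 ≤ (2 * N ^ (ν / 2)) ^ 2 := pow_le_pow_left₀ hM0.le hM2 2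
    have h4 : (N ^ (ν / 2)) ^ 2 = N ^ ν := by
      rw [← Real.rpow_natCast, ← Real.rpow_mul hN0.le]; norm_num
    rw [mul_pow, h4] at h3
    linarith
  obtain ⟨A, hA⟩ : ∃ A, A = N ^ μ := ⟨_, rfl⟩
  obtain ⟨h, hh⟩ : ∃ h, h = N ^ (-ν) := ⟨_, rfl⟩
  have hA1 : 1 ≤ A := by rw [hA]; exact Real.one_le_rpow hN.le hμ.le
  have hA0 : 0 < A := by linarith
  have hAsq : A ^ 2 = N ^ (2 * μ) := by
    rw [hA, ← Real.rpow_natCast, ← Real.rpow_mul hN0.le, mul_comm]; norm_num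
  have hAM : (M : ℝ) ^ 2 ≤ 4 * A ^ 2 := by
    rw [hAsq]
    refine hMsq.trans ?_
    have := Real.rpow_le_rpow_of_exponent_le hN.le h2
    linarith
  have hhM : h * (M : ℝ) ^ 2 ≤ 4 := by
    have e : h * N ^ ν = 1 := by
      rw [hh, ← Real.rpow_add hN0]; simp
    have h0 : 0 ≤ h := by rw [hh]; positivity
    nlinarith
  obtain ⟨δ, hδ⟩ : ∃ δ, δ = N ^ (-μ) / (M : ℝ) := ⟨_, rfl⟩
  have hδ0 : 0 ≤ δ := by rw [hδ]; positivity
  have hMδ : N ^ (-μ) = M * δ := by rw [hδ]; field_simp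
  have hAδ : A * (M * δ) = 1 := by
    rw [← hMδ, hA, ← Real.rpow_add hN0]; simp
  rw [← hδ, ← hh, hMδ]
  rw [hMδ] at hφ2
  have hπ := Real.pi_pos
  have hb1 : -Real.pi < φ₀ := by linarith
  have hb2 : φ₀ + M * δ < Real.pi := by linarith
  have hr0 : 0 < r₀ := by linarith
  have hMA2 : (M : ℝ) ^ 2 * A ^ 2 ≤ 4 * N := by
    rw [hAsq]
    have e : N ^ ν * N ^ (2 * μ) ≤ N := by
      rw [← Real.rpow_add hN0]
      calc N ^ (ν + 2 * μ) ≤ N ^ (1 : ℝ) := Real.rpow_le_rpow_of_exponent_le hN.le (by linarith)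
        _ = N := Real.rpow_one N
    have h0 : 0 ≤ N ^ (2 * μ) := by positivity
    nlinarith
  have hv1 : ‖ConeDec.vec1 M A r₀ φ₀‖ ≤ 12 * N := by
    refine (ConeDec.norm_vec1 M A r₀ φ₀ hA1 hr1).trans ?_
    have : (M : ℝ) ^ 2 * A ≤ (M : ℝ) ^ 2 * A ^ 2 := by
      gcongr; nlinarith
    linarith
  have hv2 : ‖ConeDec.vec2 M A r₀ φ₀‖ ≤ 12 * N := by
    refine (ConeDec.norm_vec2 M A r₀ φ₀ hA1 hr1).trans ?_
    linarith
  have hmeas : ∀ α β : ℝ, -Real.pi < α → β < Real.pi → Measurable fun x =>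
      (‖coneExt (sector (Set.Icc r₀ (r₀ + h)) (Set.Icc α β)) g x‖₊ : ℝ≥0∞) ^ (6 : ℝ) := by
    intro α β hα hβ
    exact (ConeDec.measurable_coneExt g hg r₀ (r₀ + h) α β hr0 hα hβ).nnnorm.coe_nnreal_ennreal.pow_const _
  have hloc := hK M A r₀ h φ₀ δ hM1 hA1 hAM hr1 hhM hδ0 hAδ hb1 hb2 g hg
  have main := ConeDec.assemble (κ.prod κ) c N hN0 _ _ hv1 hv2
    (fun x => (‖coneExt (sector (Set.Icc r₀ (r₀ + h)) (Set.Icc φ₀ (φ₀ + M * δ))) g x‖₊ : ℝ≥0∞)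
      ^ (6 : ℝ)) (hmeas _ _ hb1 hb2) M
    (fun j x => (‖coneExt (ConeDec.sub r₀ h φ₀ δ j) g x‖₊ : ℝ≥0∞) ^ (6 : ℝ))
    (fun j hj => by
      have hj' : (j : ℝ) + 1 ≤ M := by exact_mod_cast hj
      have h0 : 0 ≤ j * δ := by positivity
      have h1 : ((j : ℝ) + 1) * δ ≤ M * δ := by gcongr
      exact hmeas _ _ (by linarith) (by linarith)) _ hloc
  rw [← hc₀, ← hc₁] at main
  -- wNorm6 squared
  have hw2 : ∀ j : ℕ, wNorm6 (coneExt (sector (Set.Icc r₀ (r₀ + h))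
      (Set.Icc (φ₀ + (j : ℝ) * δ) (φ₀ + ((j : ℝ) + 1) * δ))) g) c N ^ 2 =
      (∫⁻ x, (‖coneExt (ConeDec.sub r₀ h φ₀ δ j) g x‖₊ : ℝ≥0∞) ^ (6 : ℝ) * ConeDec.wt c N x)
        ^ (1 / 3 : ℝ) := by
    intro j
    unfold wNorm6
    rw [← ENNReal.rpow_natCast, ← ENNReal.rpow_mul,
      show (1 / 6 : ℝ) * ((2 : ℕ) : ℝ) = 1 / 3 by norm_num]
    rfl
  simp_rw [hw2]
  obtain ⟨T, hT⟩ : ∃ T, T = ∑ j ∈ Finset.range M, (∫⁻ x, (‖coneExt (ConeDec.sub r₀ h φ₀ δ j) g x‖₊ : ℝ≥0∞) ^ (6 : ℝ) * ConeDec.wt c N x)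
        ^ (1 / 3 : ℝ) := ⟨_, rfl⟩
  rw [← hT] at main ⊢
  have hc0top : c₀ ≠ ∞ := by
    rw [hc₀]
    refine ne_of_lt (lt_of_le_of_lt (lintegral_mono (g := fun _ => 1) fun s => ?_) ?_)
    · rw [ENNReal.inv_le_one]
      unfold ConeDec.pm
      have h1 : ∀ t : ℝ, 1 ≤ ENNReal.ofReal ((1 + 12 * |t|) ^ 30) := fun t => by
        rw [ENNReal.one_le_ofReal]
        exact one_le_pow₀ (by have := abs_nonneg t; linarith)
      exact one_le_mul (h1 _) (h1 _)
    · rw [lintegral_one]; exact measure_lt_top _ _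
  have main2 : ∫⁻ x, (‖coneExt (sector (Set.Icc r₀ (r₀ + h)) (Set.Icc φ₀ (φ₀ + M * δ))) g x‖₊ : ℝ≥0∞)
      ^ (6 : ℝ) * ConeDec.wt c N x ≤
      ENNReal.ofReal (q * (K * (M : ℝ) ^ (6 * ε))) * T ^ 3 := by
    rw [ENNReal.ofReal_mul hq0, ← hqe]
    calc _ = c₀⁻¹ * (c₀ * _) := by rw [← mul_assoc, ENNReal.inv_mul_cancel hc0 hc0top, one_mul]
      _ ≤ c₀⁻¹ * _ := mul_le_mul_right main _
      _ = _ := by ring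
  have hMe : (M : ℝ) ^ (6 * ε) ≤ 2 ^ (6 * ε) * N ^ (6 * (ν * ε)) := by
    calc (M : ℝ) ^ (6 * ε) ≤ (2 * N ^ (ν / 2)) ^ (6 * ε) :=
          Real.rpow_le_rpow hM0.le hM2 (by positivity)
      _ = 2 ^ (6 * ε) * N ^ (ν / 2 * (6 * ε)) := by
          rw [Real.mul_rpow (by norm_num) (by positivity), ← Real.rpow_mul hN0.le]
      _ ≤ _ := by
          gcongr ?_ * ?_
          apply Real.rpow_le_rpow_of_exponent_le hN.le
          nlinarith [mul_pos hν hε]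
  calc wNorm6 (coneExt (sector (Set.Icc r₀ (r₀ + h)) (Set.Icc φ₀ (φ₀ + M * δ))) g) c N
      ≤ (ENNReal.ofReal (q * (K * (M : ℝ) ^ (6 * ε))) * T ^ 3) ^ (1 / 6 : ℝ) :=
        ENNReal.rpow_le_rpow main2 (by norm_num)
    _ = ENNReal.ofReal ((q * (K * (M : ℝ) ^ (6 * ε))) ^ (1 / 6 : ℝ)) * T ^ (1 / 2 : ℝ) := by
        rw [ENNReal.mul_rpow_of_nonneg _ _ (by norm_num),
          ENNReal.ofReal_rpow_of_nonneg (by positivity) (by norm_num), ← ENNReal.rpow_natCast,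
          ← ENNReal.rpow_mul]
        norm_num
    _ ≤ _ := by
        gcongr
        calc (q * (K * (M : ℝ) ^ (6 * ε))) ^ (1 / 6 : ℝ)
            ≤ (q * (K * (2 ^ (6 * ε) * N ^ (6 * (ν * ε))))) ^ (1 / 6 : ℝ) := by
              apply Real.rpow_le_rpow (by positivity) _ (by norm_num)
              gcongr
          _ = ((q * (K * 2 ^ (6 * ε))) * N ^ (6 * (ν * ε))) ^ (1 / 6 : ℝ) := by ring_nf
          _ = (q * (K * 2 ^ (6 * ε))) ^ (1 / 6 : ℝ) * N ^ (ν * ε) := by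
              rw [Real.mul_rpow (by positivity) (by positivity), ← Real.rpow_mul hN0.le]
              congr 2; ring
          _ ≤ _ := by
              have : 0 ≤ N ^ (ν * ε) := by positivity
              nlinarith

end
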